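/- arXiv:1909.13348 — 4 statements merged into one kernel-verified Lean document; each statement's English description precedes it below -/
import Mathlib

section
/- Let T = (p(0) < p(1) < ⋯ < p(k)) be a prefix transition path, and let τ = (t₁,…,t_k) be a sequence of letters where t_j is a transition symbol from p(j−1) to p(j). Let C_n(T,τ) be the set of words in C_n whose prefix transition path is T with j-th transition on the symbol t_j. Let γ_T be the maximum of γ_{p(i)} over i ∈ {0,…,k}, and let d_T be the number of indices i ∈ {0,…,k} with γ_{p(i)} = γ_T. Then |C_n(T,τ)| = Θ(n^{d_T−1}·γ_T^n). Consequently, |C_n| = Θ(n^{D−1}·γ^n). -/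
open Filter Asymptotics
open scoped Classical

/-- An embedding order on words over a weighted alphabet. -/
structure EmbeddingOrder (A : Type*) (w : A → ℕ) where
  le : List A → List A → Prop
  le_refl : ∀ W, le W W
  le_trans : ∀ {U V W}, le U V → le V W → le U W
  le_antisymm : ∀ {V W}, le V W → le W V → V = W
  nil_le : ∀ W, le [] W
  weight_lt : ∀ {W V}, le W V → W ≠ V → (W.map w).sum < (V.map w).sum
  le_iff_factor : ∀ W V, le W V ↔ ∃ Ws : List (List A),
    Ws.length = V.length ∧ Ws.flatten = W ∧ ∀ q ∈ Ws.zip V, le q.1 [q.2]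

namespace EmbeddingOrder

variable {A : Type*} {w : A → ℕ} (E : EmbeddingOrder A w) {f : ℕ} (φ : Fin f → List A)

/-- The weight of a word: the sum of the weights of its letters. -/
def wt (w : A → ℕ) (W : List A) : ℕ := (W.map w).sum

/-- The class `C = A* ∩ Av(φ¹,…,φ^f)` of all words avoiding every forbidden word. -/
def Cset : Set (List A) := {W | ∀ i, ¬ E.le (φ i) W}

/-- The prefix state of `W`: its `i`-th component is the length of the longest prefix
of the forbidden word `φ i` contained in `W`. -/
noncomputable def pstate (W : List A) : Fin f → ℕ := fun i =>
  sSup {p | p ≤ (φ i).length ∧ E.le ((φ i).take p) W}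

/-- The suffix state of `W`: its `i`-th component is the length of the longest suffix
of the forbidden word `φ i` contained in `W`. -/
noncomputable def sstate (W : List A) : Fin f → ℕ := fun i =>
  sSup {p | p ≤ (φ i).length ∧ E.le ((φ i).drop ((φ i).length - p)) W}

/-- A prefix state `p` and a suffix state `s` *overlap* if `p i + s i ≥ ℓ_i` for some
`i` (equivalently, `XY ∉ C` whenever `X` has prefix state `p` and `Y` suffix state `s`);
otherwise they are *compatible*. -/
def POverlap (p s : Fin f → ℕ) : Prop := ∃ i, (φ i).length ≤ p i + s i

/-- The (prefix) loop alphabet of a state `p`: the letters whose appending does not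
change the prefix state `p`. -/
def stateLoopP (p : Fin f → ℕ) : Set A :=
  {a | ∀ X : List A, E.pstate φ X = p → E.pstate φ (X ++ [a]) = p}

/-- The suffix loop alphabet of a state `s`: the letters whose prepending does not
change the suffix state `s`. -/
def stateLoopS (s : Fin f → ℕ) : Set A :=
  {a | ∀ Y : List A, E.sstate φ Y = s → E.sstate φ (a :: Y) = s}

/-- `p'` is a *prefix successor* of `p`: `p' ≠ p` and some letter is a transition
symbol from `p` to `p'`. -/
def PSucc (p p' : Fin f → ℕ) : Prop :=
  p ≠ p' ∧ ∃ b : A, ∀ X : List A, E.pstate φ X = p → E.pstate φ (X ++ [b]) = p'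

/-- `s'` is a *suffix successor* of `s`. -/
def SSucc (s s' : Fin f → ℕ) : Prop :=
  s ≠ s' ∧ ∃ b : A, ∀ Y : List A, E.sstate φ Y = s → E.sstate φ (b :: Y) = s'

/-- Compatible states `p` (prefix) and `s` (suffix) *match* if every prefix successor
of `p` overlaps with `s` and every suffix successor of `s` overlaps with `p`. -/
def Matches (p s : Fin f → ℕ) : Prop :=
  ¬ POverlap φ p s ∧ (∀ p', E.PSucc φ p p' → POverlap φ p' s) ∧
    ∀ s', E.SSucc φ s s' → POverlap φ p s'

/-- `ρ(S)`: the unique positive root of `1 − Σ_{a∈S} x^{weight a}` for a nonempty set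
`S` of letters (realised as a supremum). -/
noncomputable def rhoOf (w : A → ℕ) (S : Set A) : ℝ :=
  sSup {x : ℝ | 0 ≤ x ∧ ∑' a : S, x ^ w (a : A) ≤ 1}

/-- The growth rate of `S*`: the reciprocal `ρ(S)⁻¹` of the positive root of
`1 − Σ_{a∈S} x^{weight a}`. -/
noncomputable def growthOf (w : A → ℕ) (S : Set A) : ℝ := (rhoOf w S)⁻¹

/-- The dominant growth rate `γ` of the class: the largest growth rate of the loop
alphabet of a (reachable) prefix state. -/
noncomputable def gammaC : ℝ :=
  sSup {g : ℝ | ∃ X ∈ E.Cset φ, g = growthOf w (E.stateLoopP φ (E.pstate φ X))}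

/-- The number of dominant loop blocks (equivalently, dominant states) in the prefix
decomposition of `W`. -/
noncomputable def domCountP (W : List A) : ℕ :=
  Set.ncard {p : Fin f → ℕ | (∃ j ≤ W.length, E.pstate φ (W.take j) = p) ∧
    growthOf w (E.stateLoopP φ p) = E.gammaC φ}

/-- The number of dominant loop blocks (equivalently, dominant states) in the suffix
decomposition of `W`. -/
noncomputable def domCountS (W : List A) : ℕ :=
  Set.ncard {s : Fin f → ℕ | (∃ j ≤ W.length, E.sstate φ (W.drop j) = s) ∧
    growthOf w (E.stateLoopS φ s) = E.gammaC φ}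

/-- `D`: the largest number of dominant states appearing on a single prefix transition
path of a word of the class. -/
noncomputable def Dmax : ℕ := sSup {d : ℕ | ∃ W ∈ E.Cset φ, E.domCountP φ W = d}

end EmbeddingOrder

namespace EmbeddingOrder

variable {A : Type*} {w : A → ℕ} (E : EmbeddingOrder A w) {f : ℕ} (φ : Fin f → List A)

/-- `γ_T`: the maximum of the growth rates `γ_{p i}` of the states on the transition
path `T = (p 0 < p 1 < ⋯ < p k)`. -/
noncomputable def gT {k : ℕ} (p : Fin (k + 1) → Fin f → ℕ) : ℝ :=
  sSup {g : ℝ | ∃ j : Fin (k + 1), g = growthOf w (E.stateLoopP φ (p j))}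

/-- `d_T`: the number of states on the path `T` whose growth rate equals `γ_T`. -/
noncomputable def dT {k : ℕ} (p : Fin (k + 1) → Fin f → ℕ) : ℕ :=
  Set.ncard {j : Fin (k + 1) | growthOf w (E.stateLoopP φ (p j)) = E.gT φ p}

/-- `W` has prefix transition path `p 0 < p 1 < ⋯ < p k`, with the `j`-th transition
occurring on the symbol `τ j`. -/
def Realizes {k : ℕ} (p : Fin (k + 1) → Fin f → ℕ) (τ : Fin k → A) (W : List A) : Prop :=
  ∃ g : Fin k → ℕ, StrictMono g ∧ (∀ j, g j < W.length) ∧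
    (∀ j : Fin k, W[g j]? = some (τ j)) ∧
    (∀ j : Fin k, E.pstate φ (W.take (g j)) = p j.castSucc) ∧
    (∀ j : Fin k, E.pstate φ (W.take (g j + 1)) = p j.succ) ∧
    E.pstate φ W = p (Fin.last k) ∧
    ∀ i < W.length, (∀ j : Fin k, g j ≠ i) →
      E.pstate φ (W.take (i + 1)) = E.pstate φ (W.take i)

end EmbeddingOrder

open EmbeddingOrder

namespace TPA

section words
variable {A : Type*} {w : A → ℕ} (E : EmbeddingOrder A w) {f : ℕ} (φ : Fin f → List A)

lemma le_append {U V X Y : List A} (h1 : E.le U X) (h2 : E.le V Y) : E.le (U ++ V) (X ++ Y) := by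
  rw [E.le_iff_factor] at h1 h2 ⊢
  obtain ⟨W1, a1, b1, c1⟩ := h1
  obtain ⟨W2, a2, b2, c2⟩ := h2
  refine ⟨W1 ++ W2, by simp [a1, a2], by simp [b1, b2], ?_⟩
  rw [List.zip_append a1]
  intro q hq
  rcases List.mem_append.1 hq with h | h
  · exact c1 q h
  · exact c2 q h

lemma le_split {W X Y : List A} (h : E.le W (X ++ Y)) :
    ∃ U V, W = U ++ V ∧ E.le U X ∧ E.le V Y := by
  rw [E.le_iff_factor] at h
  obtain ⟨Ws, a, b, c⟩ := h
  have hl : (Ws.take X.length).length = X.length := by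
    simp [a]
  have hz : Ws.zip (X ++ Y) = (Ws.take X.length).zip X ++ (Ws.drop X.length).zip Y := by
    rw [← List.zip_append hl, List.take_append_drop]
  rw [hz] at c
  refine ⟨(Ws.take X.length).flatten, (Ws.drop X.length).flatten, ?_, ?_, ?_⟩
  · rw [← List.flatten_append, List.take_append_drop, b]
  · rw [E.le_iff_factor]
    exact ⟨_, hl, rfl, fun q hq => c q (List.mem_append_left _ hq)⟩
  · rw [E.le_iff_factor]
    exact ⟨_, by simp [a], rfl, fun q hq => c q (List.mem_append_right _ hq)⟩

lemma le_prefix (X Y : List A) : E.le X (X ++ Y) := by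
  simpa using le_append E (E.le_refl X) (E.nil_le Y)

lemma pstate_mem (W : List A) (i : Fin f) :
    E.pstate φ W i ≤ (φ i).length ∧ E.le ((φ i).take (E.pstate φ W i)) W := by
  have := Nat.sSup_mem (s := {p | p ≤ (φ i).length ∧ E.le ((φ i).take p) W})
    ⟨0, by simp [E.nil_le]⟩ ⟨(φ i).length, fun p hp => hp.1⟩
  exact this

lemma le_pstate {W : List A} {i : Fin f} {q : ℕ} (hq : q ≤ (φ i).length)
    (h : E.le ((φ i).take q) W) : q ≤ E.pstate φ W i :=
  le_csSup (s := {p | p ≤ (φ i).length ∧ E.le ((φ i).take p) W})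
    ⟨(φ i).length, fun p hp => hp.1⟩ ⟨hq, h⟩

lemma take_le_of_le {W : List A} {i : Fin f} {q : ℕ} (h : q ≤ E.pstate φ W i) :
    E.le ((φ i).take q) W := by
  refine E.le_trans ?_ (pstate_mem E φ W i).2
  have : (φ i).take q = ((φ i).take (E.pstate φ W i)).take q := by
    rw [List.take_take, min_eq_left h]
  rw [this]
  conv => arg 3; rw [← List.take_append_drop q ((φ i).take (E.pstate φ W i))]
  exact le_prefix E _ _

lemma pstate_mono {X Y : List A} (h : E.le X Y) : E.pstate φ X ≤ E.pstate φ Y := fun i =>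
  le_pstate E φ (pstate_mem E φ X i).1 (E.le_trans (pstate_mem E φ X i).2 h)

lemma pstate_append_le {X X' : List A} (a : A) (h : E.pstate φ X = E.pstate φ X') :
    E.pstate φ (X ++ [a]) ≤ E.pstate φ (X' ++ [a]) := by
  intro i
  obtain ⟨h1, h2⟩ := pstate_mem E φ (X ++ [a]) i
  obtain ⟨U, V, hUV, hU, hV⟩ := le_split E h2
  refine le_pstate E φ h1 ?_
  rw [hUV]
  refine le_append E ?_ hV
  have hp : U <+: φ i := by
    refine List.IsPrefix.trans ?_ (List.take_prefix (E.pstate φ (X ++ [a]) i) (φ i))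
    rw [hUV]; exact List.prefix_append _ _
  have e := List.prefix_iff_eq_take.1 hp
  rw [e]
  apply take_le_of_le
  rw [← h]
  apply le_pstate E φ hp.length_le
  rw [← e]; exact hU

lemma pstate_append_congr {X X' : List A} (a : A) (h : E.pstate φ X = E.pstate φ X') :
    E.pstate φ (X ++ [a]) = E.pstate φ (X' ++ [a]) :=
  _root_.le_antisymm (pstate_append_le E φ a h) (pstate_append_le E φ a h.symm)

lemma mem_Cset_iff (W : List A) : W ∈ E.Cset φ ↔ ∀ i, E.pstate φ W i < (φ i).length := by
  constructor
  · intro h i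
    rcases lt_or_eq_of_le (pstate_mem E φ W i).1 with h1 | h1
    · exact h1
    · have := (pstate_mem E φ W i).2
      rw [h1, List.take_length] at this
      exact absurd this (h i)
  · intro h i hi
    have := le_pstate E φ (W := W) (i := i) le_rfl (by rwa [List.take_length])
    exact absurd (h i) (not_lt.2 this)

lemma one_mem_loop {one : A} (hone_le : ∀ a : A, E.le [one] [a]) (q : Fin f → ℕ)
    (h : (E.stateLoopP φ q).Nonempty) : one ∈ E.stateLoopP φ q := by
  obtain ⟨a, ha⟩ := h
  intro X hX
  apply _root_.le_antisymm
  · rw [← ha X hX]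
    exact pstate_mono E φ (le_append E (E.le_refl X) (hone_le a))
  · conv_lhs => rw [← hX]
    exact pstate_mono E φ (le_prefix E _ _)

lemma mem_loop_of {X : List A} {a : A} {q : Fin f → ℕ} (hX : E.pstate φ X = q)
    (h : E.pstate φ (X ++ [a]) = q) : a ∈ E.stateLoopP φ q := by
  intro Y hY
  rw [← h]
  exact pstate_append_congr E φ a (hY.trans hX.symm)

lemma pstate_loop {X B : List A} {q : Fin f → ℕ} (hX : E.pstate φ X = q)
    (hB : ∀ b ∈ B, b ∈ E.stateLoopP φ q) : E.pstate φ (X ++ B) = q := by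
  induction B using List.reverseRecOn with
  | nil => simpa using hX
  | append_singleton B b ih =>
    rw [← List.append_assoc]
    exact hB b (by simp) _ (ih fun c hc => hB c (by simp [hc]))

lemma loop_of_const {X B : List A} {q : Fin f → ℕ} (hX : E.pstate φ X = q)
    (h : ∀ i < B.length, E.pstate φ (X ++ B.take (i + 1)) = E.pstate φ (X ++ B.take i)) :
    ∀ b ∈ B, b ∈ E.stateLoopP φ q := by
  induction B using List.reverseRecOn with
  | nil => simp
  | append_singleton B b ih =>
    have ih' := ih (by
      intro i hi
      have := h i (by simp; omega)
      rwa [List.take_append_of_le_length (by omega), List.take_append_of_le_length (by omega)]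
        at this)
    have h2 := pstate_loop E φ hX ih'
    have h3 := h B.length (by simp)
    rw [List.take_of_length_le (by simp), List.take_left] at h3
    intro c hc
    rcases List.mem_append.1 hc with hc | hc
    · exact ih' c hc
    · rw [List.mem_singleton] at hc
      subst hc
      refine mem_loop_of E φ h2 ?_
      rw [List.append_assoc, h3, h2]

lemma realizes_loop {k : ℕ} {p : Fin (k + 1) → Fin f → ℕ} {τ : Fin k → A} {W : List A} {a : A}
    (h : E.Realizes φ p τ W) (ha : E.pstate φ (W ++ [a]) = E.pstate φ W) :
    E.Realizes φ p τ (W ++ [a]) := by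
  obtain ⟨g, h1, h2, h3, h4, h5, h6, h7⟩ := h
  refine ⟨g, h1, fun j => ?_, fun j => ?_, fun j => ?_, fun j => ?_, ha.trans h6, ?_⟩
  · have := h2 j; simp; omega
  · rw [List.getElem?_append_left (h2 j)]; exact h3 j
  · have := h2 j
    rw [List.take_append_of_le_length (by omega)]; exact h4 j
  · have := h2 j
    rw [List.take_append_of_le_length (by omega)]; exact h5 j
  · intro i hi hj
    simp at hi
    rcases Nat.lt_or_ge i W.length with h | h
    · rw [List.take_append_of_le_length (by omega), List.take_append_of_le_length (by omega)]
      exact h7 i h hj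
    · have : i = W.length := by omega
      subst this
      rw [List.take_of_length_le (by simp), List.take_left, ha]

lemma realizes_trans {k : ℕ} {p : Fin (k + 2) → Fin f → ℕ} {τ : Fin (k + 1) → A} {W : List A}
    (h : E.Realizes φ (fun j => p j.castSucc) (fun j => τ j.castSucc) W)
    (ha : E.pstate φ (W ++ [τ (Fin.last k)]) = p (Fin.last (k + 1))) :
    E.Realizes φ p τ (W ++ [τ (Fin.last k)]) := by
  obtain ⟨g, h1, h2, h3, h4, h5, h6, h7⟩ := h
  refine ⟨Fin.snoc (α := fun _ => ℕ) g W.length, ?_, ?_, ?_, ?_, ?_, ha, ?_⟩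
  · intro i j hij
    induction j using Fin.lastCases with
    | last =>
      induction i using Fin.lastCases with
      | last => exact absurd hij (lt_irrefl _)
      | cast i => simpa using h2 i
    | cast j =>
      induction i using Fin.lastCases with
      | last => exact absurd hij (not_lt.2 (Fin.le_last _))
      | cast i => simpa using h1 (by simpa using hij)
  · intro j
    induction j using Fin.lastCases with
    | last => simp
    | cast j => have := h2 j; simp; omega
  · intro j
    induction j using Fin.lastCases with
    | last => simp
    | cast j =>
      simp only [Fin.snoc_castSucc]
      rw [List.getElem?_append_left (h2 j)]; exact h3 j
  · intro j
    induction j using Fin.lastCases with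
    | last => simpa using h6
    | cast j =>
      have := h2 j
      simp only [Fin.snoc_castSucc]
      rw [List.take_append_of_le_length (by omega)]; exact h4 j
  · intro j
    induction j using Fin.lastCases with
    | last =>
      simp only [Fin.snoc_last]
      rw [List.take_of_length_le (by simp), ha]; rfl
    | cast j =>
      have := h2 j
      simp only [Fin.snoc_castSucc]
      rw [List.take_append_of_le_length (by omega)]; exact h5 j
  · intro i hi hj
    simp at hi
    have hl := hj (Fin.last k)
    simp only [Fin.snoc_last] at hl
    rw [List.take_append_of_le_length (by omega), List.take_append_of_le_length (by omega)]
    refine h7 i (by omega) fun j => ?_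
    have := hj j.castSucc
    simpa using this

lemma realizes_loops {k : ℕ} {p : Fin (k + 1) → Fin f → ℕ} {τ : Fin k → A} {W B : List A}
    (h : E.Realizes φ p τ W) (hB : ∀ b ∈ B, b ∈ E.stateLoopP φ (p (Fin.last k))) :
    E.Realizes φ p τ (W ++ B) := by
  induction B using List.reverseRecOn with
  | nil => simpa using h
  | append_singleton B b ih =>
    rw [← List.append_assoc]
    have h1 := ih fun c hc => hB c (by simp [hc])
    have h2 : E.pstate φ (W ++ B) = p (Fin.last k) := h1.choose_spec.2.2.2.2.2.1
    exact realizes_loop E φ h1 ((hB b (by simp) _ h2).trans h2.symm)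

lemma realizes_zero {p : Fin 1 → Fin f → ℕ} {τ : Fin 0 → A} (hp0 : E.pstate φ [] = p 0)
    {W : List A} : E.Realizes φ p τ W ↔ ∀ b ∈ W, b ∈ E.stateLoopP φ (p 0) := by
  constructor
  · rintro ⟨g, h1, h2, h3, h4, h5, h6, h7⟩
    refine loop_of_const E φ hp0 fun i hi => ?_
    simpa using h7 i hi (fun j => j.elim0)
  · intro h
    have : E.Realizes φ p τ [] :=
      ⟨fun j => j.elim0, fun j => j.elim0, fun j => j.elim0, fun j => j.elim0, fun j => j.elim0,
        fun j => j.elim0, hp0, by simp⟩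
    exact realizes_loops E φ this h

lemma realizes_succ {k : ℕ} {p : Fin (k + 2) → Fin f → ℕ} {τ : Fin (k + 1) → A}
    (hτ : ∀ j : Fin (k + 1), ∀ X : List A, E.pstate φ X = p j.castSucc →
      E.pstate φ (X ++ [τ j]) = p j.succ) {W : List A} :
    E.Realizes φ p τ W ↔ ∃ X B, W = X ++ [τ (Fin.last k)] ++ B ∧
      E.Realizes φ (fun j => p j.castSucc) (fun j => τ j.castSucc) X ∧
      ∀ b ∈ B, b ∈ E.stateLoopP φ (p (Fin.last (k + 1))) := by
  constructor
  · rintro ⟨g, h1, h2, h3, h4, h5, h6, h7⟩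
    set m := g (Fin.last k) with hm
    have hml : m < W.length := h2 _
    have hW : W = W.take (m + 1) ++ W.drop (m + 1) := (List.take_append_drop _ _).symm
    have ht : W.take (m + 1) = W.take m ++ [τ (Fin.last k)] := by
      have := h3 (Fin.last k)
      rw [List.take_add_one, ← hm] at *
      rw [this]; rfl
    have hgl : ∀ j : Fin k, g j.castSucc < m := fun j => h1 (Fin.castSucc_lt_last j)
    refine ⟨W.take m, W.drop (m + 1), ?_, ?_, ?_⟩
    · rw [← ht]; exact hW
    · refine ⟨fun j => g j.castSucc, fun i j hij => h1 (by simpa using hij), ?_, ?_, ?_, ?_, ?_, ?_⟩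
      · intro j; have := hgl j; simp; omega
      · intro j
        rw [List.getElem?_take_of_lt (hgl j)]; exact h3 _
      · intro j
        rw [List.take_take, min_eq_left (hgl j).le]; exact h4 _
      · intro j
        rw [List.take_take, min_eq_left (hgl j)]; exact h5 _
      · exact h4 (Fin.last k)
      · intro i hi hj
        have hi' : i < m := by simp at hi; omega
        rw [List.take_take, List.take_take, min_eq_left (by omega), min_eq_left (by omega)]
        refine h7 i (by omega) fun j => ?_
        induction j using Fin.lastCases with
        | last => omega
        | cast j => exact hj j
    · refine loop_of_const E φ (X := W.take (m + 1)) (h5 (Fin.last k)) fun i hi => ?_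
      rw [← List.take_add, ← List.take_add]
      simp at hi
      refine h7 (m + 1 + i) (by omega) fun j => ?_
      have := h1.monotone (Fin.le_last j)
      omega
  · rintro ⟨X, B, rfl, hX, hB⟩
    refine realizes_loops E φ (realizes_trans E φ hX ?_) hB
    exact hτ (Fin.last k) X hX.choose_spec.2.2.2.2.2.1

/-- The data of a prefix transition path together with its transition symbols. -/
def Good {k : ℕ} (p : Fin (k + 1) → Fin f → ℕ) (τ : Fin k → A) : Prop :=
  E.pstate φ [] = p 0 ∧ (∀ j i, p j i < (φ i).length) ∧
  (∀ j : Fin k, p j.castSucc ≤ p j.succ ∧ p j.castSucc ≠ p j.succ) ∧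
  (∀ j : Fin k, ∀ X : List A, E.pstate φ X = p j.castSucc →
      E.pstate φ (X ++ [τ j]) = p j.succ)

lemma exists_realizes (W : List A) (hW : W ∈ E.Cset φ) :
    ∃ (k : ℕ) (p : Fin (k + 1) → Fin f → ℕ) (τ : Fin k → A), Good E φ p τ ∧
      E.Realizes φ p τ W := by
  induction W using List.reverseRecOn with
  | nil =>
    refine ⟨0, fun _ => E.pstate φ [], fun j => j.elim0, ⟨rfl, fun j i => ?_, fun j => j.elim0,
      fun j => j.elim0⟩, ?_⟩
    · exact (mem_Cset_iff E φ _).1 hW i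
    · rw [realizes_zero E φ rfl]; simp
  | append_singleton W a ih =>
    have hW' : W ∈ E.Cset φ := fun i hi => hW i (E.le_trans hi (le_prefix E _ _))
    obtain ⟨k, p, τ, ⟨g1, g2, g3, g4⟩, hR⟩ := ih hW'
    by_cases ha : E.pstate φ (W ++ [a]) = E.pstate φ W
    · exact ⟨k, p, τ, ⟨g1, g2, g3, g4⟩, realizes_loop E φ hR ha⟩
    · have hlast : E.pstate φ W = p (Fin.last k) := hR.choose_spec.2.2.2.2.2.1
      refine ⟨k + 1, Fin.snoc (α := fun _ => Fin f → ℕ) p (E.pstate φ (W ++ [a])),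
        Fin.snoc (α := fun _ => A) τ a, ⟨?_, ?_, ?_, ?_⟩, ?_⟩
      · exact g1.trans (Fin.snoc_castSucc (α := fun _ => Fin f → ℕ)
          (E.pstate φ (W ++ [a])) p 0).symm
      · intro j
        induction j using Fin.lastCases with
        | last => rw [Fin.snoc_last]; exact (mem_Cset_iff E φ _).1 hW
        | cast j => rw [Fin.snoc_castSucc]; exact g2 j
      · intro j
        induction j using Fin.lastCases with
        | last =>
          rw [Fin.succ_last, Fin.snoc_last, Fin.snoc_castSucc, ← hlast]
          exact ⟨pstate_mono E φ (le_prefix E _ _), fun h => ha h.symm⟩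
        | cast j =>
          rw [Fin.succ_castSucc, Fin.snoc_castSucc, Fin.snoc_castSucc]; exact g3 j
      · intro j X
        induction j using Fin.lastCases with
        | last =>
          rw [Fin.succ_last, Fin.snoc_last, Fin.snoc_castSucc, Fin.snoc_last, ← hlast]
          exact fun h => pstate_append_congr E φ a h
        | cast j =>
          rw [Fin.succ_castSucc, Fin.snoc_castSucc, Fin.snoc_castSucc, Fin.snoc_castSucc]
          exact g4 j X
      · have := realizes_trans E φ (W := W)
          (p := Fin.snoc (α := fun _ => Fin f → ℕ) p (E.pstate φ (W ++ [a])))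
          (τ := Fin.snoc (α := fun _ => A) τ a) (by simpa using hR) (by simp)
        simpa using this

lemma states_eq {k : ℕ} {p : Fin (k + 1) → Fin f → ℕ} {τ : Fin k → A} {W : List A}
    (hp0 : E.pstate φ [] = p 0) (h : E.Realizes φ p τ W) (q : Fin f → ℕ) :
    (∃ j ≤ W.length, E.pstate φ (W.take j) = q) ↔ ∃ j, p j = q := by
  obtain ⟨g, h1, h2, h3, h4, h5, h6, h7⟩ := h
  constructor
  · rintro ⟨j, hj, rfl⟩
    induction j with
    | zero => exact ⟨0, by simp [hp0]⟩
    | succ i ih =>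
      by_cases hg : ∀ j, g j ≠ i
      · rw [h7 i (by omega) hg]; exact ih (by omega)
      · push Not at hg
        obtain ⟨j, rfl⟩ := hg
        exact ⟨_, (h5 j).symm⟩
  · rintro ⟨j, rfl⟩
    induction j using Fin.lastCases with
    | last => exact ⟨W.length, le_rfl, by rw [List.take_length, h6]⟩
    | cast j => exact ⟨g j, (h2 j).le, h4 j⟩

lemma p_strictMono {k : ℕ} {p : Fin (k + 1) → Fin f → ℕ}
    (hmono : ∀ j : Fin k, p j.castSucc ≤ p j.succ ∧ p j.castSucc ≠ p j.succ) : StrictMono p :=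
  Fin.strictMono_iff_lt_succ.2 fun j => lt_of_le_of_ne (hmono j).1 (hmono j).2

end words
section counting
variable {A : Type*} [Fintype A] {w : A → ℕ}

/-- Number of words of weight `n` in a set of words. -/
noncomputable def cnt (w : A → ℕ) (S : Set (List A)) (n : ℕ) : ℕ :=
  Set.ncard {W | W ∈ S ∧ wt w W = n}

/-- All words over a sub-alphabet. -/
def star (L : Set A) : Set (List A) := {B | ∀ b ∈ B, b ∈ L}

lemma length_le_wt (hw : ∀ a, 0 < w a) (W : List A) : W.length ≤ wt w W := by
  induction W with
  | nil => simp [wt]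
  | cons a W ih =>
    have := hw a
    simp only [wt, List.map_cons, List.sum_cons, List.length_cons] at *
    omega

lemma wt_append (X Y : List A) : wt w (X ++ Y) = wt w X + wt w Y := by simp [wt]

lemma finite_wt (hw : ∀ a, 0 < w a) (S : Set (List A)) (n : ℕ) :
    {W | W ∈ S ∧ wt w W = n}.Finite := by
  refine (List.finite_length_le A n).subset ?_
  rintro W ⟨_, h⟩
  have := length_le_wt hw W
  simp; omega

lemma ncard_biUnion_finset {ι α : Type*} (t : Finset ι) (s : ι → Set α)
    (hs : ∀ i ∈ t, (s i).Finite) (h : (t : Set ι).PairwiseDisjoint s) :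
    (⋃ i ∈ t, s i).ncard = ∑ i ∈ t, (s i).ncard := by
  have := Set.Finite.ncard_biUnion t.finite_toSet (s := s) (by simpa using hs) h
  rw [finsum_mem_coe_finset] at this
  simpa using this

lemma star_zero (hw : ∀ a, 0 < w a) (L : Set A) : cnt w (star L) 0 = 1 := by
  rw [cnt, Set.ncard_eq_one]
  refine ⟨[], ?_⟩
  ext W
  simp only [Set.mem_ofPred_eq, Set.mem_singleton_iff]
  constructor
  · rintro ⟨_, h⟩
    have := length_le_wt hw W
    exact List.length_eq_zero_iff.1 (by omega)
  · rintro rfl; simp [star, wt]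

lemma star_rec (hw : ∀ a, 0 < w a) (L : Set A) (n : ℕ) (hn : 0 < n) :
    cnt w (star L) n =
      ∑ a ∈ Finset.univ.filter (fun a => a ∈ L ∧ w a ≤ n), cnt w (star L) (n - w a) := by
  have h : {W | W ∈ star L ∧ wt w W = n} =
      ⋃ a ∈ Finset.univ.filter (fun a => a ∈ L ∧ w a ≤ n),
        (fun B => a :: B) '' {W | W ∈ star L ∧ wt w W = n - w a} := by
    ext W
    simp only [Set.mem_ofPred_eq, Finset.mem_filter, Finset.mem_univ, true_and, Set.mem_iUnion,
      Set.mem_image, exists_prop]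
    constructor
    · rintro ⟨h1, h2⟩
      cases W with
      | nil => simp [wt] at h2; omega
      | cons a W =>
        simp only [wt, List.map_cons, List.sum_cons] at h2
        refine ⟨a, ⟨h1 a (by simp), by omega⟩, W, ⟨fun b hb => h1 b (by simp [hb]), ?_⟩, rfl⟩
        simp only [wt]; omega
    · rintro ⟨a, ⟨h1, h2⟩, B, ⟨h3, h4⟩, rfl⟩
      refine ⟨fun b hb => ?_, ?_⟩
      · rcases List.mem_cons.1 hb with rfl | hb
        · exact h1
        · exact h3 b hb
      · simp only [wt, List.map_cons, List.sum_cons] at *; omega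
  rw [cnt, h, ncard_biUnion_finset]
  · refine Finset.sum_congr rfl fun a _ => ?_
    rw [Set.ncard_image_of_injective _ (fun x y hxy => by simpa using hxy)]
    rfl
  · intro a _
    exact (finite_wt hw _ _).image _
  · intro a _ b _ hab
    refine Set.disjoint_left.2 ?_
    rintro _ ⟨B, _, rfl⟩ ⟨B', _, h⟩
    simp at h
    exact hab h.1.symm

lemma star_rec_real (hw : ∀ a, 0 < w a) (L : Set A) (x : ℝ) (n : ℕ) (hn : 0 < n) :
    (cnt w (star L) n : ℝ) * x ^ n =
      ∑ a ∈ Finset.univ.filter (fun a => a ∈ L ∧ w a ≤ n),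
        x ^ w a * ((cnt w (star L) (n - w a) : ℝ) * x ^ (n - w a)) := by
  rw [star_rec hw L n hn, Nat.cast_sum, Finset.sum_mul]
  refine Finset.sum_congr rfl fun a ha => ?_
  simp only [Finset.mem_filter] at ha
  obtain ⟨m, rfl⟩ := Nat.exists_eq_add_of_le ha.2.2
  rw [Nat.add_sub_cancel_left, pow_add]; ring

lemma star_upper (hw : ∀ a, 0 < w a) (L : Set A) (x : ℝ) (hx : 0 ≤ x)
    (h : ∑ a ∈ Finset.univ.filter (fun a => a ∈ L), x ^ w a ≤ 1) (n : ℕ) :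
    (cnt w (star L) n : ℝ) * x ^ n ≤ 1 := by
  induction n using Nat.strong_induction_on with
  | _ n ih =>
    rcases Nat.eq_zero_or_pos n with rfl | hn
    · simp [star_zero hw]
    · rw [star_rec_real hw L x n hn]
      refine _root_.le_trans ?_ h
      calc _ ≤ ∑ a ∈ Finset.univ.filter (fun a => a ∈ L ∧ w a ≤ n), x ^ w a := by
            refine Finset.sum_le_sum fun a ha => ?_
            have := ih (n - w a) (by have := hw a; omega)
            exact mul_le_of_le_one_right (by positivity) this
        _ ≤ _ := by
            refine Finset.sum_le_sum_of_subset_of_nonneg ?_ (fun _ _ _ => by positivity)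
            intro a; simp; tauto

lemma one_le_star {one : A} (hone : w one = 1) (hw : ∀ a, 0 < w a) (L : Set A)
    (h1 : one ∈ L) (n : ℕ) : 1 ≤ cnt w (star L) n := by
  rw [cnt, Nat.one_le_iff_ne_zero, Ne, Set.ncard_eq_zero (finite_wt hw _ _),
    ← Ne, ← Set.nonempty_iff_ne_empty]
  refine ⟨List.replicate n one, ?_, ?_⟩
  · intro b hb
    rw [List.eq_of_mem_replicate hb]; exact h1
  · simp [wt, hone]

lemma star_lower {one : A} (hone : w one = 1) (hw : ∀ a, 0 < w a) (L : Set A)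
    (h1 : one ∈ L) (x : ℝ) (hx : 0 < x) (hx1 : x ≤ 1)
    (h : ∑ a ∈ Finset.univ.filter (fun a => a ∈ L), x ^ w a = 1) :
    ∃ c > 0, ∀ n, c ≤ (cnt w (star L) n : ℝ) * x ^ n := by
  set M := ∑ a, w a with hM
  have hwM : ∀ a, w a ≤ M := fun a => Finset.single_le_sum (fun _ _ => Nat.zero_le _)
    (Finset.mem_univ a)
  refine ⟨x ^ M, by positivity, fun n => ?_⟩
  induction n using Nat.strong_induction_on with
  | _ n ih =>
    rcases Nat.lt_or_ge n (M + 1) with hn | hn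
    · have h2 : (1 : ℝ) ≤ cnt w (star L) n := by exact_mod_cast one_le_star hone hw L h1 n
      calc x ^ M ≤ x ^ n := pow_le_pow_of_le_one hx.le hx1 (by omega)
        _ ≤ _ := le_mul_of_one_le_left (by positivity) h2
    · rw [star_rec_real hw L x n (by omega)]
      have hf : Finset.univ.filter (fun a => a ∈ L ∧ w a ≤ n) =
          Finset.univ.filter (fun a => a ∈ L) := by
        ext a
        have := hwM a
        simp
        intro _; omega
      rw [hf]
      calc x ^ M = ∑ a ∈ Finset.univ.filter (fun a => a ∈ L), x ^ w a * x ^ M := by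
            rw [← Finset.sum_mul, h, one_mul]
        _ ≤ _ := by
            refine Finset.sum_le_sum fun a _ => ?_
            have := ih (n - w a) (by have := hw a; omega)
            exact mul_le_mul_of_nonneg_left this (by positivity)

lemma growth_empty : growthOf w (∅ : Set A) = 0 := by
  have : ¬ BddAbove {x : ℝ | 0 ≤ x ∧ ∑' a : (∅ : Set A), x ^ w (a : A) ≤ 1} := by
    rintro ⟨M, hM⟩
    have := hM (show max (M + 1) 0 ∈ _ from ⟨le_max_right _ _, by simp⟩)
    have := le_max_left (M + 1) 0
    linarith
  rw [growthOf, rhoOf, Real.sSup_of_not_bddAbove this, inv_zero]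

lemma rho_spec {one : A} (hone : w one = 1) (hw : ∀ a, 0 < w a) (L : Set A) (h1 : one ∈ L) :
    0 < rhoOf w L ∧ rhoOf w L ≤ 1 ∧
      ∑ a ∈ Finset.univ.filter (fun a => a ∈ L), rhoOf w L ^ w a = 1 := by
  set h : ℝ → ℝ := fun x => ∑ a ∈ Finset.univ.filter (fun a => a ∈ L), x ^ w a with hh
  have hts : ∀ x : ℝ, ∑' a : L, x ^ w (a : A) = h x := by
    intro x
    rw [tsum_fintype, hh]
    exact (Finset.sum_subtype _ (by simp) (fun a => x ^ w a)).symm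
  have hone_mem : one ∈ Finset.univ.filter (fun a => a ∈ L) := by simp [h1]
  have hge : ∀ x : ℝ, 0 ≤ x → x ≤ h x := by
    intro x hx
    have := Finset.single_le_sum (f := fun a => x ^ w a) (fun a _ => by positivity) hone_mem
    simpa [hone] using this
  have h0 : h 0 = 0 := Finset.sum_eq_zero fun a _ => zero_pow (hw a).ne'
  have hc : Continuous h := by fun_prop
  have hivt := intermediate_value_Icc (zero_le_one' ℝ) hc.continuousOn
  obtain ⟨x, hx, hx1⟩ := hivt ⟨by rw [h0]; norm_num, hge 1 zero_le_one⟩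
  have hxpos : 0 < x := by
    rcases hx.1.lt_or_eq with h | h
    · exact h
    · rw [← h, h0] at hx1; norm_num at hx1
  have hlt : ∀ y, x < y → 1 < h y := by
    intro y hy
    rw [← hx1]
    exact Finset.sum_lt_sum_of_nonempty ⟨one, hone_mem⟩
      fun a _ => pow_lt_pow_left₀ hy hx.1 (hw a).ne'
  have hr : rhoOf w L = x := by
    refine IsGreatest.csSup_eq ⟨⟨hx.1, by rw [hts, hx1]⟩, ?_⟩
    rintro y ⟨hy0, hy⟩
    rw [hts] at hy
    by_contra! hxy
    exact absurd (hlt y hxy) (not_lt.2 hy)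
  rw [hr]
  exact ⟨hxpos, hx.2, hx1⟩

lemma star_le_growth {one : A} (hone : w one = 1) (hw : ∀ a, 0 < w a) (L : Set A)
    (hL : L.Nonempty → one ∈ L) (n : ℕ) : (cnt w (star L) n : ℝ) ≤ growthOf w L ^ n := by
  rcases L.eq_empty_or_nonempty with rfl | h
  · rw [growth_empty]
    rcases Nat.eq_zero_or_pos n with rfl | hn
    · simp [star_zero hw]
    · rw [star_rec hw _ n hn]; simp [hn.ne']
  · obtain ⟨h1, h2, h3⟩ := rho_spec hone hw L (hL h)
    have := star_upper hw L _ h1.le h3.le n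
    rw [growthOf, inv_pow, ← one_div, le_div_iff₀ (by positivity)]
    exact this

lemma growth_cases {one : A} (hone : w one = 1) (hw : ∀ a, 0 < w a) (L : Set A)
    (hL : L.Nonempty → one ∈ L) : growthOf w L = 0 ∨ 1 ≤ growthOf w L ∧ 
      ∃ c > 0, ∀ n, c * growthOf w L ^ n ≤ (cnt w (star L) n : ℝ) := by
  rcases L.eq_empty_or_nonempty with rfl | h
  · exact Or.inl growth_empty
  · right
    obtain ⟨h1, h2, h3⟩ := rho_spec hone hw L (hL h)
    refine ⟨(one_le_inv₀ h1).2 h2, ?_⟩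
    obtain ⟨c, hc, h⟩ := star_lower hone hw L (hL ‹_›) _ h1 h2 h3
    refine ⟨c, hc, fun n => ?_⟩
    rw [growthOf, inv_pow, ← div_eq_mul_inv, div_le_iff₀ (by positivity)]
    exact h n

/-- Counting concatenations `X t B`. -/
lemma cnt_concat (hw : ∀ a, 0 < w a) (S T R : Set (List A)) (t : A)
    (hR : ∀ W, W ∈ R ↔ ∃ X B, W = X ++ [t] ++ B ∧ X ∈ S ∧ B ∈ T)
    (hinj : ∀ X ∈ S, ∀ X' ∈ S, ∀ Y, X' ≠ X ++ [t] ++ Y) (n : ℕ) :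
    cnt w R (n + w t) = ∑ q ∈ Finset.HasAntidiagonal.antidiagonal n, cnt w S q.1 * cnt w T q.2 := by
  have h : {W | W ∈ R ∧ wt w W = n + w t} =
      ⋃ q ∈ Finset.HasAntidiagonal.antidiagonal n, (fun q : List A × List A => q.1 ++ [t] ++ q.2) ''
        ({W | W ∈ S ∧ wt w W = q.1} ×ˢ {W | W ∈ T ∧ wt w W = q.2}) := by
    ext W
    simp only [Set.mem_ofPred_eq, Finset.HasAntidiagonal.mem_antidiagonal, Set.mem_iUnion,
      Set.mem_image, exists_prop, Prod.exists, Set.mem_prod, hR]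
    constructor
    · rintro ⟨⟨X, B, rfl, hX, hB⟩, h⟩
      refine ⟨wt w X, wt w B, ?_, X, B, ⟨⟨hX, rfl⟩, hB, rfl⟩, rfl⟩
      simp only [wt_append] at h
      simp [wt] at *; omega
    · rintro ⟨i, j, hij, X, B, ⟨⟨hX, rfl⟩, hB, rfl⟩, rfl⟩
      refine ⟨⟨X, B, rfl, hX, hB⟩, ?_⟩
      simp only [wt_append]
      simp [wt] at *; omega
  have key : ∀ X ∈ S, ∀ X' ∈ S, ∀ B B' : List A, X ++ [t] ++ B = X' ++ [t] ++ B' →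
      X = X' ∧ B = B' := by
    intro X hX X' hX' B B' he
    have hXX : X.length = X'.length := by
      by_contra hne
      rcases Nat.lt_or_gt_of_ne hne with hl | hl
      · have hp : X ++ [t] <+: X' := by
          refine List.prefix_of_prefix_length_le (l₃ := X' ++ [t] ++ B') ?_ ?_ (by simp; omega)
          · rw [← he]; exact List.prefix_append _ _
          · rw [List.append_assoc]; exact List.prefix_append _ _
        obtain ⟨Y, hY⟩ := hp
        exact hinj X hX X' hX' Y hY.symm
      · have hp : X' ++ [t] <+: X := by
          refine List.prefix_of_prefix_length_le (l₃ := X ++ [t] ++ B) ?_ ?_ (by simp; omega)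
          · rw [he]; exact List.prefix_append _ _
          · rw [List.append_assoc]; exact List.prefix_append _ _
        obtain ⟨Y, hY⟩ := hp
        exact hinj X' hX' X hX Y hY.symm
    rw [List.append_assoc, List.append_assoc] at he
    obtain ⟨e1, e2⟩ := List.append_inj he hXX
    exact ⟨e1, by simpa using e2⟩
  rw [cnt, h, ncard_biUnion_finset]
  · refine Finset.sum_congr rfl fun q _ => ?_
    rw [Set.InjOn.ncard_image, Set.ncard_prod]
    · rfl
    · rintro ⟨X, B⟩ ⟨⟨hX, _⟩, _⟩ ⟨X', B'⟩ ⟨⟨hX', _⟩, _⟩ he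
      obtain ⟨rfl, rfl⟩ := key X hX X' hX' B B' he
      rfl
  · intro q _
    exact ((finite_wt hw _ _).prod (finite_wt hw _ _)).image _
  · rintro ⟨i, j⟩ _ ⟨i', j'⟩ _ hne
    refine Set.disjoint_left.2 ?_
    rintro _ ⟨⟨X, B⟩, ⟨⟨hX, hXi⟩, _, hBj⟩, rfl⟩ ⟨⟨X', B'⟩, ⟨⟨hX', hXi'⟩, _, hBj'⟩, he⟩
    obtain ⟨rfl, rfl⟩ := key X hX X' hX' B B' he.symm
    apply hne
    simp only at hXi hXi' hBj hBj'
    rw [← hXi, ← hXi', ← hBj, ← hBj']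

lemma cnt_concat_small (hw : ∀ a, 0 < w a) (S T R : Set (List A)) (t : A)
    (hR : ∀ W, W ∈ R ↔ ∃ X B, W = X ++ [t] ++ B ∧ X ∈ S ∧ B ∈ T) (n : ℕ) (hn : n < w t) :
    cnt w R n = 0 := by
  rw [cnt, Set.ncard_eq_zero (finite_wt hw _ _), Set.eq_empty_iff_forall_notMem]
  rintro W ⟨h1, h2⟩
  obtain ⟨X, B, rfl, _, _⟩ := (hR W).1 h1
  simp only [wt_append] at h2
  simp [wt] at h2; omega

end counting
section analysis

/-- Cauchy product of sequences. -/
noncomputable def conv (u v : ℕ → ℝ) (n : ℕ) : ℝ :=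
  ∑ q ∈ Finset.HasAntidiagonal.antidiagonal n, u q.1 * v q.2

/-- Nonnegative, nonzero and summable. -/
def T0 (v : ℕ → ℝ) : Prop := (∀ n, 0 ≤ v n) ∧ Summable v ∧ ∃ m, 0 < v m

/-- Nonnegative of polynomial order exactly `e`. -/
def T1 (e : ℕ) (v : ℕ → ℝ) : Prop := (∀ n, 0 ≤ v n) ∧
  (∃ C : ℝ, 0 ≤ C ∧ ∀ n : ℕ, v n ≤ C * ((n : ℝ) + 1) ^ e) ∧
  ∃ c : ℝ, 0 < c ∧ ∃ N : ℕ, ∀ n : ℕ, N ≤ n → c * ((n : ℝ) + 1) ^ e ≤ v n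

/-- `d` dominant factors. -/
def TT (d : ℕ) (v : ℕ → ℝ) : Prop := (d = 0 ∧ T0 v) ∨ (∃ e, d = e + 1 ∧ T1 e v)

lemma conv_comm (u v : ℕ → ℝ) : conv u v = conv v u := by
  funext n
  rw [conv, conv, ← Finset.Nat.sum_antidiagonal_swap]
  exact Finset.sum_congr rfl fun q _ => mul_comm _ _

lemma conv_nonneg {u v : ℕ → ℝ} (hu : ∀ n, 0 ≤ u n) (hv : ∀ n, 0 ≤ v n) (n : ℕ) :
    0 ≤ conv u v n := Finset.sum_nonneg fun q _ => mul_nonneg (hu _) (hv _)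

lemma le_conv {u v : ℕ → ℝ} (hu : ∀ n, 0 ≤ u n) (hv : ∀ n, 0 ≤ v n) (i j : ℕ) :
    u i * v j ≤ conv u v (i + j) :=
  Finset.single_le_sum (f := fun q : ℕ × ℕ => u q.1 * v q.2)
    (fun q _ => mul_nonneg (hu _) (hv _))
    (Finset.HasAntidiagonal.mem_antidiagonal.2 (show (i, j).1 + (i, j).2 = i + j from rfl))

lemma conv_T0 {u v : ℕ → ℝ} (hu : T0 u) (hv : T0 v) : T0 (conv u v) := by
  obtain ⟨u0, us, m, hm⟩ := hu
  obtain ⟨v0, vs, l, hl⟩ := hv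
  refine ⟨conv_nonneg u0 v0, ?_, m + l, lt_of_lt_of_le (mul_pos hm hl) (le_conv u0 v0 m l)⟩
  exact summable_sum_mul_antidiagonal_of_summable_mul (Summable.mul_of_nonneg us vs u0 v0)

lemma shift_ineq (n s : ℕ) (e : ℕ) :
    (1 / ((s : ℝ) + 1)) ^ e * (((n + s : ℕ) : ℝ) + 1) ^ e ≤ ((n : ℝ) + 1) ^ e := by
  rw [← mul_pow]
  refine pow_le_pow_left₀ (by positivity) ?_ e
  rw [one_div_mul_eq_div, div_le_iff₀ (by positivity)]
  push_cast
  have : (0 : ℝ) ≤ n * s := by positivity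
  linarith

lemma conv_T1_T0 {u v : ℕ → ℝ} {e : ℕ} (hu : T1 e u) (hv : T0 v) : T1 e (conv u v) := by
  obtain ⟨u0, ⟨C, hC, hCu⟩, c, hc, N, hN⟩ := hu
  obtain ⟨v0, vs, m, hm⟩ := hv
  refine ⟨conv_nonneg u0 v0, ⟨C * ∑' i, v i, mul_nonneg hC (tsum_nonneg v0), fun n => ?_⟩,
    c * (1 / ((m : ℝ) + 1)) ^ e * v m, by positivity, N + m, fun n hn => ?_⟩
  · calc conv u v n ≤ ∑ q ∈ Finset.HasAntidiagonal.antidiagonal n,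
          (C * ((n : ℝ) + 1) ^ e) * v q.2 := by
          refine Finset.sum_le_sum fun q hq => mul_le_mul_of_nonneg_right ?_ (v0 _)
          refine (hCu _).trans ?_
          have : q.1 ≤ n := by
            have := Finset.HasAntidiagonal.mem_antidiagonal.1 hq; omega
          gcongr
      _ = (C * ((n : ℝ) + 1) ^ e) * ∑ j ∈ Finset.range (n + 1), v j := by
          rw [← Finset.mul_sum, ← Finset.Nat.sum_antidiagonal_swap,
            Finset.Nat.sum_antidiagonal_eq_sum_range_succ_mk]
          rfl
      _ ≤ (C * ((n : ℝ) + 1) ^ e) * ∑' i, v i :=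
          mul_le_mul_of_nonneg_left (vs.sum_le_tsum _ fun i _ => v0 i) (by positivity)
      _ = _ := by ring
  · obtain ⟨i, rfl⟩ : ∃ i, n = i + m := ⟨n - m, by omega⟩
    refine _root_.le_trans ?_ (le_conv u0 v0 i m)
    have h1 := hN i (by omega)
    have h2 := shift_ineq i m e
    calc _ = (c * ((1 / ((m : ℝ) + 1)) ^ e * (((i + m : ℕ) : ℝ) + 1) ^ e)) * v m := by ring
      _ ≤ (c * ((i : ℝ) + 1) ^ e) * v m := by gcongr
      _ ≤ _ := by gcongr

lemma conv_T1_full {u v : ℕ → ℝ} {e : ℕ} (hu : T1 e u) {b B : ℝ} (hb : 0 < b)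
    (hv : ∀ n, b ≤ v n) (hvB : ∀ n, v n ≤ B) : T1 (e + 1) (conv u v) := by
  obtain ⟨u0, ⟨C, hC, hCu⟩, c, hc, N, hN⟩ := hu
  have v0 : ∀ n, 0 ≤ v n := fun n => hb.le.trans (hv n)
  have hB : 0 ≤ B := (v0 0).trans (hvB 0)
  refine ⟨conv_nonneg u0 v0, ⟨C * B, by positivity, fun n => ?_⟩,
    c * b * (1 / 2) ^ (e + 1), by positivity, 2 * N, fun n hn => ?_⟩
  · calc conv u v n ≤ ∑ q ∈ Finset.HasAntidiagonal.antidiagonal n,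
          (C * ((n : ℝ) + 1) ^ e) * B := by
          refine Finset.sum_le_sum fun q hq => ?_
          have : q.1 ≤ n := by
            have := Finset.HasAntidiagonal.mem_antidiagonal.1 hq; omega
          refine mul_le_mul ((hCu _).trans ?_) (hvB _) (v0 _) (by positivity)
          gcongr
      _ = _ := by
          rw [Finset.sum_const, Finset.Nat.card_antidiagonal, nsmul_eq_mul]
          push_cast; ring
  · have h1 : conv u v n = ∑ i ∈ Finset.range (n + 1), u i * v (n - i) :=
      Finset.Nat.sum_antidiagonal_eq_sum_range_succ_mk _ _
    rw [h1]
    set s := (n + 1) / 2 with hs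
    have hcard : (n + 1 : ℝ) / 2 ≤ (((Finset.Ico s (n + 1)).card : ℕ) : ℝ) := by
      rw [Nat.card_Ico, div_le_iff₀ (by norm_num)]
      have : n + 1 ≤ (n + 1 - s) * 2 := by omega
      exact_mod_cast this
    calc c * b * (1 / 2) ^ (e + 1) * ((n : ℝ) + 1) ^ (e + 1)
        = ((n + 1 : ℝ) / 2) * (c * (((n : ℝ) + 1) / 2) ^ e * b) := by
          rw [div_pow, pow_succ, pow_succ, div_pow]; ring
      _ ≤ (((Finset.Ico s (n + 1)).card : ℕ) : ℝ) * (c * (((n : ℝ) + 1) / 2) ^ e * b) := by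
          gcongr
      _ = ∑ i ∈ Finset.Ico s (n + 1), (c * (((n : ℝ) + 1) / 2) ^ e * b) := by
          rw [Finset.sum_const, nsmul_eq_mul]
      _ ≤ ∑ i ∈ Finset.Ico s (n + 1), u i * v (n - i) := by
          refine Finset.sum_le_sum fun i hi => ?_
          have hi' := Finset.mem_Ico.1 hi
          refine mul_le_mul (_root_.le_trans ?_ (hN i (by omega))) (hv _) hb.le (u0 _)
          refine mul_le_mul_of_nonneg_left (pow_le_pow_left₀ (by positivity) ?_ _) hc.le
          rw [div_le_iff₀ (by norm_num)]
          have : n + 1 ≤ (i + 1) * 2 := by omega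
          exact_mod_cast this
      _ ≤ _ := by
          refine Finset.sum_le_sum_of_subset_of_nonneg ?_
            (fun i _ _ => mul_nonneg (u0 _) (v0 _))
          intro i hi
          have hi' := Finset.mem_Ico.1 hi
          simp; omega

lemma full_T1 {v : ℕ → ℝ} {b B : ℝ} (hb : 0 < b)
    (hv : ∀ n, b ≤ v n) (hvB : ∀ n, v n ≤ B) : T1 0 v :=
  ⟨fun n => hb.le.trans (hv n), ⟨B, (hb.le.trans (hv 0)).trans (hvB 0), by simpa using hvB⟩,
    b, hb, 0, fun n _ => by simpa using hv n⟩

lemma conv_TT_T0 {u v : ℕ → ℝ} {d : ℕ} (hu : TT d u) (hv : T0 v) : TT d (conv u v) := by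
  rcases hu with ⟨rfl, h⟩ | ⟨e, rfl, h⟩
  · exact Or.inl ⟨rfl, conv_T0 h hv⟩
  · exact Or.inr ⟨e, rfl, conv_T1_T0 h hv⟩

lemma conv_TT_full {u v : ℕ → ℝ} {d : ℕ} (hu : TT d u) {b B : ℝ} (hb : 0 < b)
    (hv : ∀ n, b ≤ v n) (hvB : ∀ n, v n ≤ B) : TT (d + 1) (conv u v) := by
  rcases hu with ⟨rfl, h⟩ | ⟨e, rfl, h⟩
  · rw [conv_comm]
    exact Or.inr ⟨0, rfl, conv_T1_T0 (full_T1 hb hv hvB) h⟩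
  · exact Or.inr ⟨e + 1, rfl, conv_T1_full h hb hv hvB⟩

lemma shift_TT {u v : ℕ → ℝ} {d : ℕ} (hu : TT d u) {a : ℝ} (ha : 0 < a) (s : ℕ)
    (h1 : ∀ n, v (n + s) = a * u n) (h2 : ∀ n < s, v n = 0) : TT d v := by
  have v0 : (∀ n, 0 ≤ u n) → ∀ n, 0 ≤ v n := by
    intro u0 n
    rcases Nat.lt_or_ge n s with h | h
    · rw [h2 n h]
    · obtain ⟨i, rfl⟩ : ∃ i, n = i + s := ⟨n - s, by omega⟩
      rw [h1]; exact mul_nonneg ha.le (u0 i)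
  rcases hu with ⟨rfl, u0, us, m, hm⟩ | ⟨e, rfl, u0, ⟨C, hC, hCu⟩, c, hc, N, hN⟩
  · refine Or.inl ⟨rfl, v0 u0, ?_, m + s, by rw [h1]; positivity⟩
    rw [← summable_nat_add_iff s]
    simp_rw [h1]
    exact us.mul_left a
  · refine Or.inr ⟨e, rfl, v0 u0, ⟨a * C, by positivity, fun n => ?_⟩,
      a * (c * (1 / ((s : ℝ) + 1)) ^ e), by positivity, N + s, fun n hn => ?_⟩
    · rcases Nat.lt_or_ge n s with h | h
      · rw [h2 n h]; positivity
      · obtain ⟨i, rfl⟩ : ∃ i, n = i + s := ⟨n - s, by omega⟩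
        rw [h1, mul_assoc]
        refine mul_le_mul_of_nonneg_left ((hCu i).trans ?_) ha.le
        gcongr
        omega
    · obtain ⟨i, rfl⟩ : ∃ i, n = i + s := ⟨n - s, by omega⟩
      rw [h1, mul_assoc, mul_assoc]
      refine mul_le_mul_of_nonneg_left (_root_.le_trans ?_ (hN i (by omega))) ha.le
      exact mul_le_mul_of_nonneg_left (shift_ineq i s e) hc.le

lemma theta_of_T1 {F : ℕ → ℝ} {e : ℕ} {G : ℝ} (hG : 0 < G)
    (h : T1 e (fun n => F n * (G⁻¹) ^ n)) :
    F =Θ[atTop] fun n : ℕ => (n : ℝ) ^ e * G ^ n := by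
  obtain ⟨v0, ⟨C, hC, hCu⟩, c, hc, N, hN⟩ := h
  have hF : ∀ n, F n = (F n * (G⁻¹) ^ n) * G ^ n := by
    intro n
    rw [mul_assoc, ← mul_pow, inv_mul_cancel₀ hG.ne', one_pow, mul_one]
  have hF0 : ∀ n, 0 ≤ F n := fun n => by
    rw [hF]; exact mul_nonneg (v0 n) (by positivity)
  constructor
  · refine IsBigO.of_bound (C * 2 ^ e) ?_
    filter_upwards [eventually_ge_atTop 1] with n hn
    have hn' : (1 : ℝ) ≤ n := by exact_mod_cast hn
    rw [Real.norm_of_nonneg (hF0 n), Real.norm_of_nonneg (by positivity), hF]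
    have h3 : ((n : ℝ) + 1) ^ e ≤ (2 * n) ^ e :=
      pow_le_pow_left₀ (by positivity) (by linarith) e
    calc _ ≤ (C * ((n : ℝ) + 1) ^ e) * G ^ n := 
          mul_le_mul_of_nonneg_right (hCu n) (by positivity)
      _ ≤ (C * (2 * n) ^ e) * G ^ n := by gcongr
      _ = _ := by rw [mul_pow]; ring
  · refine IsBigO.of_bound (1 / c) ?_
    filter_upwards [eventually_ge_atTop N] with n hn
    rw [Real.norm_of_nonneg (hF0 n), Real.norm_of_nonneg (by positivity), one_div_mul_eq_div,
      le_div_iff₀ hc, hF]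
    calc _ = (c * (n : ℝ) ^ e) * G ^ n := by ring
      _ ≤ (c * ((n : ℝ) + 1) ^ e) * G ^ n := by gcongr; linarith
      _ ≤ _ := mul_le_mul_of_nonneg_right (hN n hn) (by positivity)

end analysis
section final
variable {A : Type*} [Fintype A] {w : A → ℕ} (E : EmbeddingOrder A w) {f : ℕ}
  (φ : Fin f → List A)

lemma block_full {one : A} (hone : w one = 1) (hw : ∀ a, 0 < w a) (L : Set A)
    (hL : L.Nonempty → one ∈ L) (G : ℝ) (hG : 1 ≤ G) (h : growthOf w L = G) :
    ∃ b > 0, (∀ n, b ≤ (cnt w (star L) n : ℝ) * G⁻¹ ^ n) ∧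
      ∀ n, (cnt w (star L) n : ℝ) * G⁻¹ ^ n ≤ 1 := by
  have hG0 : 0 < G := by linarith
  rcases growth_cases hone hw L hL with h0 | ⟨_, c, hc, h1⟩
  · linarith
  · refine ⟨c, hc, fun n => ?_, fun n => ?_⟩
    · rw [inv_pow, ← div_eq_mul_inv, le_div_iff₀ (by positivity), ← h]; exact h1 n
    · rw [inv_pow, ← div_eq_mul_inv, div_le_iff₀ (by positivity), ← h, one_mul]
      exact star_le_growth hone hw L hL n

lemma block_T0 {one : A} (hone : w one = 1) (hw : ∀ a, 0 < w a) (L : Set A)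
    (hL : L.Nonempty → one ∈ L) (G : ℝ) (hG : 1 ≤ G) (h : growthOf w L < G) :
    T0 (fun n => (cnt w (star L) n : ℝ) * G⁻¹ ^ n) := by
  have hG0 : 0 < G := by linarith
  have hg0 : 0 ≤ growthOf w L := by
    rcases growth_cases hone hw L hL with h0 | ⟨h0, _⟩ <;> linarith
  refine ⟨fun n => by positivity, ?_, 0, by simp [star_zero hw]⟩
  refine Summable.of_nonneg_of_le (fun n => by positivity) (fun n => ?_)
    (summable_geometric_of_lt_one (r := growthOf w L * G⁻¹) (by positivity) ?_)
  · rw [mul_pow]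
    exact mul_le_mul_of_nonneg_right (star_le_growth hone hw L hL n) (by positivity)
  · rw [← div_eq_mul_inv, div_lt_one hG0]; exact h

lemma realizes_inj {k : ℕ} {p : Fin (k + 2) → Fin f → ℕ} {τ : Fin (k + 1) → A}
    (hmono : ∀ j : Fin (k + 1), p j.castSucc ≤ p j.succ ∧ p j.castSucc ≠ p j.succ)
    (hτ : ∀ j : Fin (k + 1), ∀ X : List A, E.pstate φ X = p j.castSucc →
      E.pstate φ (X ++ [τ j]) = p j.succ) (X X' : List A)
    (hX : E.Realizes φ (fun j => p j.castSucc) (fun j => τ j.castSucc) X)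
    (hX' : E.Realizes φ (fun j => p j.castSucc) (fun j => τ j.castSucc) X') (Y : List A) :
    X' ≠ X ++ [τ (Fin.last k)] ++ Y := by
  intro h
  have h1 : E.pstate φ X = p (Fin.last k).castSucc := hX.choose_spec.2.2.2.2.2.1
  have h2 : E.pstate φ X' = p (Fin.last k).castSucc := hX'.choose_spec.2.2.2.2.2.1
  have h3 := hτ _ X h1
  have h4 : p (Fin.last k).succ ≤ p (Fin.last k).castSucc := by
    rw [← h3, ← h2, h]
    exact pstate_mono E φ (le_prefix E _ _)
  exact (hmono (Fin.last k)).2 (_root_.le_antisymm (hmono _).1 h4)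

lemma path_TT {one : A} (hone : w one = 1) (hw : ∀ a, 0 < w a)
    (hone_le : ∀ a : A, E.le [one] [a]) (G : ℝ) (hG : 1 ≤ G) (k : ℕ) :
    ∀ (p : Fin (k + 1) → Fin f → ℕ) (τ : Fin k → A)
    (_ : E.pstate φ [] = p 0)
    (_ : ∀ j : Fin k, p j.castSucc ≤ p j.succ ∧ p j.castSucc ≠ p j.succ)
    (_ : ∀ j : Fin k, ∀ X : List A, E.pstate φ X = p j.castSucc →
      E.pstate φ (X ++ [τ j]) = p j.succ)
    (_ : ∀ j, growthOf w (E.stateLoopP φ (p j)) ≤ G),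
    TT (∑ j, if growthOf w (E.stateLoopP φ (p j)) = G then 1 else 0)
      (fun n => (cnt w {W | E.Realizes φ p τ W} n : ℝ) * G⁻¹ ^ n) := by
  have hG0 : 0 < G := by linarith
  induction k with
  | zero =>
    intro p τ hp0 hmono hτ hle
    have hS : {W | E.Realizes φ p τ W} = star (E.stateLoopP φ (p 0)) := by
      ext W; exact realizes_zero E φ hp0
    rw [hS]
    have hL := one_mem_loop E φ hone_le (p 0)
    by_cases h : growthOf w (E.stateLoopP φ (p 0)) = G
    · obtain ⟨b, hb, h1, h2⟩ := block_full hone hw _ hL G hG h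
      simp only [Nat.reduceAdd, Finset.univ_unique, Fin.default_eq_zero, Finset.sum_singleton,
        if_pos h]
      exact Or.inr ⟨0, rfl, full_T1 hb h1 h2⟩
    · simp only [Nat.reduceAdd, Finset.univ_unique, Fin.default_eq_zero, Finset.sum_singleton,
        if_neg h]
      exact Or.inl ⟨rfl, block_T0 hone hw _ hL G hG (lt_of_le_of_ne (hle 0) h)⟩
  | succ k ih =>
    intro p τ hp0 hmono hτ hle
    have ih' := ih (fun j => p j.castSucc) (fun j => τ j.castSucc) hp0
      (fun j => hmono j.castSucc) (fun j => hτ j.castSucc) (fun j => hle _)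
    set L := E.stateLoopP φ (p (Fin.last (k + 1))) with hLdef
    have hL := one_mem_loop E φ hone_le (p (Fin.last (k + 1)))
    have hR : ∀ W, W ∈ {W | E.Realizes φ p τ W} ↔ ∃ X B, W = X ++ [τ (Fin.last k)] ++ B ∧
        X ∈ {X | E.Realizes φ (fun j => p j.castSucc) (fun j => τ j.castSucc) X} ∧
        B ∈ star L := fun W => realizes_succ E φ hτ
    have hc := cnt_concat hw _ _ _ _ hR
      (fun X hX X' hX' Y => realizes_inj E φ hmono hτ X X' hX hX' Y)
    have hc0 := cnt_concat_small hw _ _ _ _ hR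
    rw [Fin.sum_univ_castSucc]
    refine shift_TT (u := conv
      (fun n => (cnt w {X | E.Realizes φ (fun j => p j.castSucc) (fun j => τ j.castSucc) X} n : ℝ)
        * G⁻¹ ^ n) (fun n => (cnt w (star L) n : ℝ) * G⁻¹ ^ n)) ?_
      (a := G⁻¹ ^ w (τ (Fin.last k))) (by positivity) (w (τ (Fin.last k))) ?_ ?_
    · by_cases h : growthOf w L = G
      · rw [if_pos h]
        obtain ⟨b, hb, h1, h2⟩ := block_full hone hw _ hL G hG h
        exact conv_TT_full ih' hb h1 h2
      · rw [if_neg h, add_zero]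
        exact conv_TT_T0 ih' (block_T0 hone hw _ hL G hG (lt_of_le_of_ne (hle _) h))
    · intro n
      simp only [hc, conv, Nat.cast_sum, Nat.cast_mul]
      rw [Finset.sum_mul, Finset.mul_sum]
      refine Finset.sum_congr rfl fun q hq => ?_
      rw [← Finset.HasAntidiagonal.mem_antidiagonal.1 hq, pow_add, pow_add]
      ring
    · intro n hn
      simp only [hc0 n hn, Nat.cast_zero, zero_mul]

lemma path_zero {one : A} (hone : w one = 1) (hw : ∀ a, 0 < w a)
    (hone_le : ∀ a : A, E.le [one] [a]) (k : ℕ) :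
    ∀ (p : Fin (k + 1) → Fin f → ℕ) (τ : Fin k → A)
    (_ : E.pstate φ [] = p 0)
    (_ : ∀ j : Fin k, p j.castSucc ≤ p j.succ ∧ p j.castSucc ≠ p j.succ)
    (_ : ∀ j : Fin k, ∀ X : List A, E.pstate φ X = p j.castSucc →
      E.pstate φ (X ++ [τ j]) = p j.succ)
    (_ : ∀ j, growthOf w (E.stateLoopP φ (p j)) = 0),
    ∃ N, ∀ n, N < n → cnt w {W | E.Realizes φ p τ W} n = 0 := by
  have hb : ∀ q, growthOf w (E.stateLoopP φ q) = 0 → ∀ n, 0 < n →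
      cnt w (star (E.stateLoopP φ q)) n = 0 := by
    intro q hq n hn
    have := star_le_growth hone hw _ (one_mem_loop E φ hone_le q) n
    rw [hq, zero_pow hn.ne'] at this
    have h0 : (cnt w (star (E.stateLoopP φ q)) n : ℝ) = 0 :=
      _root_.le_antisymm this (by positivity)
    exact_mod_cast h0
  induction k with
  | zero =>
    intro p τ hp0 hmono hτ hle
    have hS : {W | E.Realizes φ p τ W} = star (E.stateLoopP φ (p 0)) := by
      ext W; exact realizes_zero E φ hp0
    rw [hS]
    exact ⟨0, hb _ (hle 0)⟩
  | succ k ih =>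
    intro p τ hp0 hmono hτ hle
    obtain ⟨N, hN⟩ := ih (fun j => p j.castSucc) (fun j => τ j.castSucc) hp0
      (fun j => hmono j.castSucc) (fun j => hτ j.castSucc) (fun j => hle _)
    have hR : ∀ W, W ∈ {W | E.Realizes φ p τ W} ↔ ∃ X B, W = X ++ [τ (Fin.last k)] ++ B ∧
        X ∈ {X | E.Realizes φ (fun j => p j.castSucc) (fun j => τ j.castSucc) X} ∧
        B ∈ star (E.stateLoopP φ (p (Fin.last (k + 1)))) := fun W => realizes_succ E φ hτ
    have hc := cnt_concat hw _ _ _ _ hR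
      (fun X hX X' hX' Y => realizes_inj E φ hmono hτ X X' hX hX' Y)
    refine ⟨N + w (τ (Fin.last k)), fun n hn => ?_⟩
    obtain ⟨m, rfl⟩ : ∃ m, n = m + w (τ (Fin.last k)) := ⟨n - w (τ (Fin.last k)), by omega⟩
    rw [hc]
    refine Finset.sum_eq_zero fun q hq => ?_
    have hq' := Finset.HasAntidiagonal.mem_antidiagonal.1 hq
    rcases Nat.eq_zero_or_pos q.2 with h | h
    · rw [hN q.1 (by omega), zero_mul]
    · rw [hb _ (hle _) q.2 h, mul_zero]

lemma gT_spec {k : ℕ} (p : Fin (k + 1) → Fin f → ℕ) :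
    (∀ j, growthOf w (E.stateLoopP φ (p j)) ≤ E.gT φ p) ∧
      ∃ j, growthOf w (E.stateLoopP φ (p j)) = E.gT φ p := by
  have hs : {g : ℝ | ∃ j : Fin (k + 1), g = growthOf w (E.stateLoopP φ (p j))} =
      Set.range (fun j => growthOf w (E.stateLoopP φ (p j))) := by
    ext g; simp [eq_comm]
  have hfin := Set.finite_range (fun j => growthOf w (E.stateLoopP φ (p j)))
  rw [gT, hs]
  exact ⟨fun j => le_csSup hfin.bddAbove ⟨j, rfl⟩,
    (Set.range_nonempty _).csSup_mem hfin⟩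

lemma dT_eq {k : ℕ} (p : Fin (k + 1) → Fin f → ℕ) :
    E.dT φ p = ∑ j, if growthOf w (E.stateLoopP φ (p j)) = E.gT φ p then 1 else 0 := by
  rw [dT, Set.ncard_eq_toFinset_card', ← Finset.card_filter]
  congr 1
  ext j; simp

lemma dT_pos {k : ℕ} (p : Fin (k + 1) → Fin f → ℕ) : 0 < E.dT φ p := by
  rw [dT, Set.ncard_pos (Set.toFinite _)]
  exact (gT_spec E φ p).2

lemma growth_nonneg {one : A} (hone : w one = 1) (hw : ∀ a, 0 < w a)
    (hone_le : ∀ a : A, E.le [one] [a]) (q : Fin f → ℕ) :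
    growthOf w (E.stateLoopP φ q) = 0 ∨ 1 ≤ growthOf w (E.stateLoopP φ q) := by
  rcases growth_cases hone hw _ (one_mem_loop E φ hone_le q) with h | h
  · exact Or.inl h
  · exact Or.inr h.1

lemma part_one {one : A} (hone : w one = 1) (hw : ∀ a, 0 < w a)
    (hone_le : ∀ a : A, E.le [one] [a]) {k : ℕ} (p : Fin (k + 1) → Fin f → ℕ) (τ : Fin k → A)
    (hg : Good E φ p τ) :
    (fun n => (Set.ncard {W : List A | W ∈ E.Cset φ ∧ wt w W = n ∧
          E.Realizes φ p τ W} : ℝ))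
        =Θ[atTop] fun n => (n : ℝ) ^ (E.dT φ p - 1) * E.gT φ p ^ n := by
  obtain ⟨hp0, hvalid, hmono, hτ⟩ := hg
  have hset : ∀ n, Set.ncard {W : List A | W ∈ E.Cset φ ∧ wt w W = n ∧ E.Realizes φ p τ W} =
      cnt w {W | E.Realizes φ p τ W} n := by
    intro n
    rw [cnt]
    congr 1
    ext W
    simp only [Set.mem_ofPred_eq]
    constructor
    · rintro ⟨_, h1, h2⟩; exact ⟨h2, h1⟩
    · rintro ⟨h2, h1⟩
      refine ⟨(mem_Cset_iff E φ W).2 fun i => ?_, h1, h2⟩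
      have h3 : E.pstate φ W = p (Fin.last k) := h2.choose_spec.2.2.2.2.2.1
      rw [h3]; exact hvalid _ i
  simp_rw [hset]
  obtain ⟨hle, j, hj⟩ := gT_spec E φ p
  rcases growth_nonneg E φ hone hw hone_le (p j) with h0 | h1
  · rw [hj] at h0
    have hall : ∀ j, growthOf w (E.stateLoopP φ (p j)) = 0 := by
      intro j
      have := hle j
      rcases growth_nonneg E φ hone hw hone_le (p j) with h | h
      · exact h
      · linarith
    obtain ⟨N, hN⟩ := path_zero E φ hone hw hone_le k p τ hp0 hmono hτ hall
    refine EventuallyEq.isTheta ?_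
    filter_upwards [eventually_gt_atTop N] with n hn
    rw [hN n hn, h0, zero_pow (by omega)]; simp
  · rw [hj] at h1
    have := path_TT E φ hone hw hone_le _ h1 k p τ hp0 hmono hτ hle
    rw [← dT_eq] at this
    have hpos := dT_pos E φ p
    rcases this with ⟨h, _⟩ | ⟨e, he, h⟩
    · omega
    · rw [he, Nat.add_sub_cancel]
      exact theta_of_T1 (by linarith) h

lemma domCount_eq {k : ℕ} {p : Fin (k + 1) → Fin f → ℕ} {τ : Fin k → A} {W : List A}
    (hg : Good E φ p τ) (h : E.Realizes φ p τ W) :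
    E.domCountP φ W =
      Set.ncard {j : Fin (k + 1) | growthOf w (E.stateLoopP φ (p j)) = E.gammaC φ} := by
  rw [domCountP, ← Set.ncard_image_of_injective _ (p_strictMono hg.2.2.1).injective]
  congr 1
  ext q
  simp only [Set.mem_ofPred_eq, Set.mem_image, states_eq E φ hg.1 h]
  constructor
  · rintro ⟨⟨j, rfl⟩, h⟩; exact ⟨j, h, rfl⟩
  · rintro ⟨j, h, rfl⟩; exact ⟨⟨j, rfl⟩, h⟩

lemma gammaC_spec (hC : (E.Cset φ).Nonempty) :
    (∀ X ∈ E.Cset φ, growthOf w (E.stateLoopP φ (E.pstate φ X)) ≤ E.gammaC φ) ∧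
      ∃ X ∈ E.Cset φ, growthOf w (E.stateLoopP φ (E.pstate φ X)) = E.gammaC φ := by
  set S := {g : ℝ | ∃ X ∈ E.Cset φ, g = growthOf w (E.stateLoopP φ (E.pstate φ X))} with hS
  have hfin : S.Finite := by
    refine (Set.finite_range (fun L : Set A => growthOf w L)).subset ?_
    rintro _ ⟨X, _, rfl⟩
    exact ⟨_, rfl⟩
  have hne : S.Nonempty := by
    obtain ⟨X, hX⟩ := hC
    exact ⟨_, X, hX, rfl⟩
  refine ⟨fun X hX => le_csSup hfin.bddAbove ⟨X, hX, rfl⟩, ?_⟩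
  obtain ⟨X, hX, h⟩ := hne.csSup_mem hfin
  exact ⟨X, hX, h.symm⟩

lemma path_length {k : ℕ} {p : Fin (k + 1) → Fin f → ℕ} {τ : Fin k → A}
    (hg : Good E φ p τ) : k + 1 ≤ Fintype.card (∀ i : Fin f, Fin (φ i).length) := by
  have hinj := (p_strictMono hg.2.2.1).injective
  have : Function.Injective
      (fun j : Fin (k + 1) => (fun i => ⟨p j i, hg.2.1 j i⟩ : ∀ i : Fin f, Fin (φ i).length)) := by
    intro j j' h
    apply hinj
    funext i
    have := congrFun h i
    simpa using this
  simpa using Fintype.card_le_of_injective _ this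

lemma Dmax_spec (hC : (E.Cset φ).Nonempty) :
    (∀ W ∈ E.Cset φ, E.domCountP φ W ≤ E.Dmax φ) ∧
      ∃ W ∈ E.Cset φ, E.domCountP φ W = E.Dmax φ := by
  have hb : BddAbove {d : ℕ | ∃ W ∈ E.Cset φ, E.domCountP φ W = d} := by
    refine ⟨Fintype.card (∀ i : Fin f, Fin (φ i).length), ?_⟩
    rintro _ ⟨W, hW, rfl⟩
    obtain ⟨k, p, τ, hg, hR⟩ := exists_realizes E φ W hW
    rw [domCount_eq E φ hg hR]
    refine _root_.le_trans (Set.ncard_le_card _) ?_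
    simpa using path_length E φ hg
  refine ⟨fun W hW => le_csSup hb ⟨W, hW, rfl⟩, ?_⟩
  obtain ⟨W, hW⟩ := hC
  exact Nat.sSup_mem (s := {d : ℕ | ∃ W ∈ E.Cset φ, E.domCountP φ W = d}) ⟨_, W, hW, rfl⟩ hb

/-- Every path is realized by some word of the class, ending in any given state of the path. -/
lemma exists_word {k : ℕ} (p : Fin (k + 1) → Fin f → ℕ) (τ : Fin k → A)
    (hg : Good E φ p τ) (j : Fin (k + 1)) : ∃ X ∈ E.Cset φ, E.pstate φ X = p j := by
  induction j using Fin.induction with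
  | zero => exact ⟨[], (mem_Cset_iff E φ _).2 fun i => by rw [hg.1]; exact hg.2.1 _ i, hg.1⟩
  | succ j ih =>
    obtain ⟨X, _, hX⟩ := ih
    have := hg.2.2.2 j X hX
    exact ⟨_, (mem_Cset_iff E φ _).2 fun i => by rw [this]; exact hg.2.1 _ i, this⟩

lemma exists_word_path (k : ℕ) : ∀ (p : Fin (k + 1) → Fin f → ℕ) (τ : Fin k → A)
    (_ : Good E φ p τ), ∃ X ∈ E.Cset φ, E.Realizes φ p τ X := by
  have key : ∀ k, ∀ (p : Fin (k + 1) → Fin f → ℕ) (τ : Fin k → A)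
      (_ : Good E φ p τ), ∃ X, E.Realizes φ p τ X := by
    intro k
    induction k with
    | zero => intro p τ hg; exact ⟨[], (realizes_zero E φ hg.1).2 (by simp)⟩
    | succ k ih =>
      intro p τ hg
      obtain ⟨X, hX⟩ := ih (fun j => p j.castSucc) (fun j => τ j.castSucc)
        ⟨hg.1, fun j => hg.2.1 _, fun j => hg.2.2.1 j.castSucc, fun j => hg.2.2.2 j.castSucc⟩
      exact ⟨_, realizes_trans E φ hX (hg.2.2.2 _ X hX.choose_spec.2.2.2.2.2.1)⟩
  intro p τ hg
  obtain ⟨X, hX⟩ := key k p τ hg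
  refine ⟨X, (mem_Cset_iff E φ X).2 fun i => ?_, hX⟩
  have h3 : E.pstate φ X = p (Fin.last k) := hX.choose_spec.2.2.2.2.2.1
  rw [h3]; exact hg.2.1 _ i

lemma path_bigO {one : A} (hone : w one = 1) (hw : ∀ a, 0 < w a)
    (hone_le : ∀ a : A, E.le [one] [a]) {k : ℕ} (p : Fin (k + 1) → Fin f → ℕ) (τ : Fin k → A)
    (hg : Good E φ p τ) (hC : (E.Cset φ).Nonempty) :
    (fun n => (Set.ncard {W : List A | W ∈ E.Cset φ ∧ wt w W = n ∧
          E.Realizes φ p τ W} : ℝ))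
        =O[atTop] fun n => (n : ℝ) ^ (E.Dmax φ - 1) * E.gammaC φ ^ n := by
  refine (part_one E φ hone hw hone_le p τ hg).1.trans ?_
  obtain ⟨hle, j, hj⟩ := gT_spec E φ p
  obtain ⟨X, hX, hXj⟩ := exists_word E φ p τ hg j
  have hgle : E.gT φ p ≤ E.gammaC φ := by
    rw [← hj, ← hXj]; exact (gammaC_spec E φ hC).1 X hX
  have hg0 : 0 ≤ E.gT φ p := by
    rw [← hj]
    rcases growth_nonneg E φ hone hw hone_le (p j) with h | h <;> linarith
  rcases hgle.lt_or_eq with hlt | heq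
  · refine (isLittleO_pow_const_mul_const_pow_const_pow_of_norm_lt _
      (by rwa [Real.norm_of_nonneg hg0])).isBigO.trans ?_
    refine IsBigO.of_bound 1 ?_
    filter_upwards [eventually_ge_atTop 1] with n hn
    have hn' : (1 : ℝ) ≤ n := by exact_mod_cast hn
    rw [one_mul, norm_mul]
    refine le_mul_of_one_le_left (norm_nonneg _) ?_
    rw [Real.norm_of_nonneg (by positivity)]
    exact one_le_pow₀ hn'
  · obtain ⟨W, hW, hR⟩ := exists_word_path E φ k p τ hg
    have hd : E.dT φ p ≤ E.Dmax φ := by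
      have := (Dmax_spec E φ hC).1 W hW
      rw [domCount_eq E φ hg hR, ← heq] at this
      exact this
    rw [heq]
    refine IsBigO.of_bound 1 ?_
    filter_upwards [eventually_ge_atTop 1] with n hn
    have hn' : (1 : ℝ) ≤ n := by exact_mod_cast hn
    rw [one_mul, norm_mul, norm_mul]
    refine mul_le_mul_of_nonneg_right ?_ (norm_nonneg _)
    rw [Real.norm_of_nonneg (by positivity), Real.norm_of_nonneg (by positivity)]
    exact pow_le_pow_right₀ hn' (by omega)

lemma part_two {one : A} (hone : w one = 1) (hw : ∀ a, 0 < w a)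
    (hone_le : ∀ a : A, E.le [one] [a]) (hC : (E.Cset φ).Nonempty) :
    (fun n => (Set.ncard {W : List A | W ∈ E.Cset φ ∧ wt w W = n} : ℝ))
        =Θ[atTop] fun n => (n : ℝ) ^ (E.Dmax φ - 1) * E.gammaC φ ^ n := by
  constructor
  · let ι := Σ k : Fin (Fintype.card (∀ i : Fin f, Fin (φ i).length)),
      (Fin ((k : ℕ) + 1) → ∀ i : Fin f, Fin (φ i).length) × (Fin (k : ℕ) → A)
    let P : ∀ x : ι, Fin ((x.1 : ℕ) + 1) → Fin f → ℕ := fun x j i => x.2.1 j i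
    let S : ι → ℕ → Set (List A) := fun x n => {W : List A | W ∈ E.Cset φ ∧ wt w W = n ∧
          E.Realizes φ (P x) x.2.2 W}
    let t : Finset ι := Finset.univ.filter (fun x => Good E φ (P x) x.2.2)
    have hsub : ∀ n, {W : List A | W ∈ E.Cset φ ∧ wt w W = n} ⊆ ⋃ x ∈ t, S x n := by
      rintro n W ⟨hW, hn⟩
      obtain ⟨k, p, τ, hg, hR⟩ := exists_realizes E φ W hW
      simp only [Set.mem_iUnion]
      exact ⟨⟨⟨k, path_length E φ hg⟩, fun j i => ⟨p j i, hg.2.1 j i⟩, τ⟩,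
        Finset.mem_filter.2 ⟨Finset.mem_univ _, hg⟩, hW, hn, hR⟩
    have hfin : ∀ n, (⋃ x ∈ t, S x n).Finite := by
      intro n
      refine t.finite_toSet.biUnion fun x _ => (finite_wt hw (E.Cset φ) n).subset ?_
      rintro W ⟨h1, h2, _⟩; exact ⟨h1, h2⟩
    have hle : ∀ n, (Set.ncard {W : List A | W ∈ E.Cset φ ∧ wt w W = n} : ℝ) ≤
        ∑ x ∈ t, (Set.ncard (S x n) : ℝ) := by
      intro n
      have h1 := Set.ncard_le_ncard (hsub n) (hfin n)
      have h2 := Finset.set_ncard_biUnion_le t (fun x => S x n)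
      exact_mod_cast h1.trans h2
    suffices hsum : (fun n => (Set.ncard {W : List A | W ∈ E.Cset φ ∧ wt w W = n} : ℝ)) =O[atTop]
        fun n => ∑ x ∈ t, (Set.ncard (S x n) : ℝ) by
      refine hsum.trans ?_
      apply IsBigO.fun_sum
      intro x hx
      exact path_bigO E φ hone hw hone_le (P x) x.2.2 (Finset.mem_filter.1 hx).2 hC
    refine IsBigO.of_bound 1 (Eventually.of_forall fun n => ?_)
    rw [one_mul, Real.norm_of_nonneg (by positivity), Real.norm_of_nonneg (by positivity)]
    exact hle n
  · obtain ⟨X, hX, hXg⟩ := (gammaC_spec E φ hC).2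
    have hD1 : 0 < E.Dmax φ := by
      refine lt_of_lt_of_le ?_ ((Dmax_spec E φ hC).1 X hX)
      obtain ⟨k, p, τ, hg, hR⟩ := exists_realizes E φ X hX
      rw [domCount_eq E φ hg hR, Set.ncard_pos (Set.toFinite _)]
      refine ⟨Fin.last k, ?_⟩
      have h3 : E.pstate φ X = p (Fin.last k) := hR.choose_spec.2.2.2.2.2.1
      rw [h3] at hXg
      exact hXg
    obtain ⟨W, hW, hWD⟩ := (Dmax_spec E φ hC).2
    obtain ⟨k, p, τ, hg, hR⟩ := exists_realizes E φ W hW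
    rw [domCount_eq E φ hg hR] at hWD
    obtain ⟨hle, j, hj⟩ := gT_spec E φ p
    have hgT : E.gT φ p = E.gammaC φ := by
      apply _root_.le_antisymm
      · obtain ⟨Y, hY, hYj⟩ := exists_word E φ p τ hg j
        rw [← hj, ← hYj]; exact (gammaC_spec E φ hC).1 Y hY
      · rw [← hWD, Set.ncard_pos (Set.toFinite _)] at hD1
        obtain ⟨i, hi⟩ := hD1
        have hi' : growthOf w (E.stateLoopP φ (p i)) = E.gammaC φ := hi
        rw [← hi']; exact hle i
    have hdT : E.dT φ p = E.Dmax φ := by rw [dT, hgT, hWD]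
    have := (part_one E φ hone hw hone_le p τ hg).2
    rw [hdT, hgT] at this
    refine this.trans (IsBigO.of_bound 1 (Eventually.of_forall fun n => ?_))
    rw [one_mul, Real.norm_of_nonneg (by positivity), Real.norm_of_nonneg (by positivity)]
    have h1 : {W : List A | W ∈ E.Cset φ ∧ wt w W = n ∧ E.Realizes φ p τ W} ⊆
        {W : List A | W ∈ E.Cset φ ∧ wt w W = n} := fun W h => ⟨h.1, h.2.1⟩
    exact_mod_cast Set.ncard_le_ncard h1 (finite_wt hw _ n)

end final

end TPA

/-- **Proposition `pro-growth`.**  Let `T = (p 0 < p 1 < ⋯ < p k)` be a prefix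
transition path (valid states, starting at the initial state) and `τ j` a transition
symbol from `p j` to `p (j+1)`.  Let `C_n(T,τ)` be the set of weight-`n` words of `C`
with prefix transition path `T`, the `j`-th transition on symbol `τ j`.  Then
`|C_n(T,τ)| = Θ(n^{d_T−1}·γ_Tⁿ)`; consequently `|C_n| = Θ(n^{D−1}·γⁿ)`. -/
theorem transition_path_asymptotics {A : Type*} [Fintype A] {w : A → ℕ}
    (E : EmbeddingOrder A w) {f : ℕ} (φ : Fin f → List A)
    (hw : ∀ a, 0 < w a)
    (one : A) (hone : w one = 1) (hone_le : ∀ a : A, E.le [one] [a])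
    (hf : 0 < f) (hφne : ∀ i, φ i ≠ [])
    (hφmin : ∀ i ψ, E.le ψ (φ i) → ψ ≠ φ i → ψ ∈ E.Cset φ)
    (hunb : ¬ ∃ M : ℕ, ∀ n : ℕ,
      Set.ncard {W : List A | W ∈ E.Cset φ ∧ EmbeddingOrder.wt w W = n} ≤ M)
    (k : ℕ) (p : Fin (k + 1) → Fin f → ℕ) (τ : Fin k → A)
    (hp0 : E.pstate φ [] = p 0)
    (hvalid : ∀ j i, p j i < (φ i).length)
    (hmono : ∀ j : Fin k, p j.castSucc ≤ p j.succ ∧ p j.castSucc ≠ p j.succ)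
    (hτ : ∀ j : Fin k, ∀ X : List A, E.pstate φ X = p j.castSucc →
      E.pstate φ (X ++ [τ j]) = p j.succ) :
    ((fun n => (Set.ncard {W : List A | W ∈ E.Cset φ ∧ wt w W = n ∧
          E.Realizes φ p τ W} : ℝ))
        =Θ[atTop] fun n => (n : ℝ) ^ (E.dT φ p - 1) * E.gT φ p ^ n) ∧
      ((fun n => (Set.ncard {W : List A | W ∈ E.Cset φ ∧ wt w W = n} : ℝ))
        =Θ[atTop] fun n => (n : ℝ) ^ (E.Dmax φ - 1) * E.gammaC φ ^ n) := by
  have hg : TPA.Good E φ p τ := ⟨hp0, hvalid, hmono, hτ⟩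
  refine ⟨TPA.part_one E φ hone hw hone_le p τ hg, TPA.part_two E φ hone hw hone_le ?_⟩
  exact ⟨[], (TPA.mem_Cset_iff E φ _).2 fun i => by rw [hp0]; exact hvalid _ i⟩
end

section
/- Let W be a uniformly random word from the set C_n. With probability 1 − 2^{−Ω(√n)}, the total weight of the non-dominant loop blocks in the prefix decomposition of W is smaller than √n. -/
open Filter Asymptotics
open scoped Classical

namespace EmbeddingOrder

variable {A : Type*} {w : A → ℕ} (E : EmbeddingOrder A w) {f : ℕ} (φ : Fin f → List A)

/-- The total weight of the non-dominant loop blocks in the prefix decomposition of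
`W`: the sum of the weights of the letters of `W` that are loop symbols whose current
state has non-dominant loop alphabet. -/
noncomputable def nondomWtP (W : List A) : ℕ :=
  ∑ i : Fin W.length,
    if E.pstate φ (W.take ((i : ℕ) + 1)) = E.pstate φ (W.take (i : ℕ)) ∧
        growthOf w (E.stateLoopP φ (E.pstate φ (W.take (i : ℕ)))) ≠ E.gammaC φ
      then w (W.get i) else 0

end EmbeddingOrder

open EmbeddingOrder

namespace NonDom

section comb
variable {A : Type*} {w : A → ℕ} (E : EmbeddingOrder A w) {f : ℕ} (φ : Fin f → List A)

lemma append_le {U1 U2 X Y : List A} (h1 : E.le U1 X) (h2 : E.le U2 Y) :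
    E.le (U1 ++ U2) (X ++ Y) := by
  obtain ⟨Ws, hl, hf, hz⟩ := (E.le_iff_factor _ _).1 h1
  obtain ⟨Vs, hl', hf', hz'⟩ := (E.le_iff_factor _ _).1 h2
  refine (E.le_iff_factor _ _).2 ⟨Ws ++ Vs, by simp [hl, hl'], by simp [hf, hf'], ?_⟩
  intro q hq
  rw [List.zip_append hl] at hq
  rcases List.mem_append.1 hq with h | h
  · exact hz q h
  · exact hz' q h

lemma le_append {U X Y : List A} (h : E.le U (X ++ Y)) :
    ∃ U1 U2, U = U1 ++ U2 ∧ E.le U1 X ∧ E.le U2 Y := by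
  obtain ⟨Ws, hl, hf, hz⟩ := (E.le_iff_factor _ _).1 h
  have hl1 : (Ws.take X.length).length = X.length := by
    simp at hl ⊢; omega
  have hl2 : (Ws.drop X.length).length = Y.length := by
    simp at hl ⊢; omega
  have hzip : Ws.zip (X ++ Y) = (Ws.take X.length).zip X ++ (Ws.drop X.length).zip Y := by
    conv_lhs => rw [← List.take_append_drop X.length Ws]
    rw [List.zip_append hl1]
  refine ⟨(Ws.take X.length).flatten, (Ws.drop X.length).flatten, ?_, ?_, ?_⟩
  · rw [← List.flatten_append, List.take_append_drop, hf]
  · refine (E.le_iff_factor _ _).2 ⟨_, hl1, rfl, fun q hq => hz q ?_⟩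
    rw [hzip]; exact List.mem_append_left _ hq
  · refine (E.le_iff_factor _ _).2 ⟨_, hl2, rfl, fun q hq => hz q ?_⟩
    rw [hzip]; exact List.mem_append_right _ hq

lemma le_append_self (X Y : List A) : E.le X (X ++ Y) := by
  have := append_le E (E.le_refl X) (E.nil_le Y)
  simpa using this

lemma le_append_self' (X Y : List A) : E.le Y (X ++ Y) := by
  have := append_le E (E.nil_le X) (E.le_refl Y)
  simpa using this

lemma take_le {p q : ℕ} (h : p ≤ q) (W : List A) : E.le (W.take p) (W.take q) := by
  have : W.take q = W.take p ++ (W.take q).drop p := by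
    conv_lhs => rw [← List.take_append_drop p (W.take q)]
    rw [List.take_take, min_eq_left h]
  rw [this]; exact le_append_self E _ _

lemma bdd (X : List A) (i : Fin f) :
    BddAbove {p | p ≤ (φ i).length ∧ E.le ((φ i).take p) X} :=
  ⟨(φ i).length, fun _ hp => hp.1⟩

lemma pstate_mem (X : List A) (i : Fin f) :
    E.pstate φ X i ≤ (φ i).length ∧ E.le ((φ i).take (E.pstate φ X i)) X := by
  have := Nat.sSup_mem (s := {p | p ≤ (φ i).length ∧ E.le ((φ i).take p) X})
    ⟨0, by simp [E.nil_le]⟩ (bdd E φ X i)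
  exact this

lemma le_pstate_iff (X : List A) (i : Fin f) (p : ℕ) (hp : p ≤ (φ i).length) :
    p ≤ E.pstate φ X i ↔ E.le ((φ i).take p) X := by
  constructor
  · intro h
    exact E.le_trans (take_le E h _) (pstate_mem E φ X i).2
  · intro h
    exact le_csSup (bdd E φ X i) ⟨hp, h⟩

lemma pstate_mono {X Y : List A} (h : E.le X Y) : E.pstate φ X ≤ E.pstate φ Y := by
  intro i
  rw [le_pstate_iff E φ Y i _ (pstate_mem E φ X i).1]
  exact E.le_trans (pstate_mem E φ X i).2 h

lemma take_le_snoc_iff (X : List A) (a : A) (i : Fin f) (p : ℕ) (hp : p ≤ (φ i).length) :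
    E.le ((φ i).take p) (X ++ [a]) ↔
      ∃ q ≤ p, q ≤ E.pstate φ X i ∧ E.le (((φ i).take p).drop q) [a] := by
  constructor
  · intro h
    obtain ⟨U1, U2, hU, h1, h2⟩ := le_append E h
    have hlen : U1.length ≤ p := by
      have := congrArg List.length hU
      simp at this; omega
    have e1 : U1 = (φ i).take U1.length := by
      have := congrArg (List.take U1.length) hU
      simpa [List.take_take, min_eq_left hlen] using this.symm
    refine ⟨U1.length, hlen, ?_, ?_⟩
    · rw [le_pstate_iff E φ X i _ (hlen.trans hp), ← e1]; exact h1
    · rw [hU]; simpa using h2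
  · rintro ⟨q, hq, hq', h⟩
    rw [le_pstate_iff E φ X i _ (hq.trans hp)] at hq'
    have := append_le E hq' h
    rwa [← min_eq_left hq, ← List.take_take, min_eq_left hq, List.take_append_drop] at this

lemma pstate_snoc_congr {X Y : List A} (h : E.pstate φ X = E.pstate φ Y) (a : A) :
    E.pstate φ (X ++ [a]) = E.pstate φ (Y ++ [a]) := by
  funext i
  unfold EmbeddingOrder.pstate
  congr 1
  ext p
  simp only [Set.mem_setOf_eq]
  refine and_congr_right fun hp => ?_
  rw [take_le_snoc_iff E φ X a i p hp, take_le_snoc_iff E φ Y a i p hp, h]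

lemma mem_loop_iff (X : List A) (a : A) :
    a ∈ E.stateLoopP φ (E.pstate φ X) ↔ E.pstate φ (X ++ [a]) = E.pstate φ X := by
  constructor
  · intro h; exact h X rfl
  · intro h Y hY
    rw [pstate_snoc_congr E φ hY a, h]

lemma one_mem_loop {one : A} (hone_le : ∀ a : A, E.le [one] [a]) (X : List A)
    (h : (E.stateLoopP φ (E.pstate φ X)).Nonempty) : one ∈ E.stateLoopP φ (E.pstate φ X) := by
  obtain ⟨a, ha⟩ := h
  rw [mem_loop_iff] at ha ⊢
  apply _root_.le_antisymm
  · rw [← ha]; exact pstate_mono E φ (append_le E (E.le_refl X) (hone_le a))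
  · exact pstate_mono E φ (le_append_self E _ _)

lemma Cset_down {X Y : List A} (h : E.le X Y) (hY : Y ∈ E.Cset φ) : X ∈ E.Cset φ :=
  fun i hi => hY i (E.le_trans hi h)

lemma mem_Cset_iff (X : List A) : X ∈ E.Cset φ ↔ ∀ i, E.pstate φ X i < (φ i).length := by
  refine forall_congr' fun i => ?_
  rw [← not_le, le_pstate_iff E φ X i _ le_rfl, List.take_length]

lemma pstate_append_loop (X V : List A)
    (hV : ∀ a ∈ V, a ∈ E.stateLoopP φ (E.pstate φ X)) :
    E.pstate φ (X ++ V) = E.pstate φ X := by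
  induction V using List.reverseRecOn with
  | nil => simp
  | append_singleton V a ih =>
    have h1 := ih (fun b hb => hV b (by simp [hb]))
    rw [← List.append_assoc]
    have := hV a (by simp)
    rw [← h1, mem_loop_iff] at this
    rw [this, h1]

/-- rank of the state of `W` -/
noncomputable def rank (W : List A) : ℕ := ∑ i, E.pstate φ W i

lemma rank_le (W : List A) : rank E φ W ≤ ∑ i, (φ i).length :=
  Finset.sum_le_sum fun i _ => (pstate_mem E φ W i).1

lemma rank_lt (W : List A) (a : A) (h : E.pstate φ (W ++ [a]) ≠ E.pstate φ W) :
    rank E φ W + 1 ≤ rank E φ (W ++ [a]) := by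
  have hle : E.pstate φ W ≤ E.pstate φ (W ++ [a]) := pstate_mono E φ (le_append_self E _ _)
  obtain ⟨i, hi⟩ := Function.ne_iff.1 h
  exact Finset.sum_lt_sum (fun i _ => hle i) ⟨i, Finset.mem_univ _, lt_of_le_of_ne (hle i) hi.symm⟩

lemma nd_snoc (W : List A) (a : A) : E.nondomWtP φ (W ++ [a]) = E.nondomWtP φ W +
    if E.pstate φ (W ++ [a]) = E.pstate φ W ∧
      growthOf w (E.stateLoopP φ (E.pstate φ W)) ≠ E.gammaC φ then w a else 0 := by
  unfold EmbeddingOrder.nondomWtP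
  have h : (W ++ [a]).length = W.length + 1 := by simp
  rw [← Equiv.sum_comp (finCongr h.symm), Fin.sum_univ_castSucc]
  congr 1
  · apply Finset.sum_congr rfl
    intro i _
    have h1 : (i : ℕ) + 1 ≤ W.length := i.2
    have h2 : (i : ℕ) ≤ W.length := i.2.le
    simp [List.take_append_of_le_length h1, List.take_append_of_le_length h2]
  · have e : List.take (W.length + 1) (W ++ [a]) = W ++ [a] := List.take_of_length_le (by simp)
    simp [e]

lemma wt_snoc (W : List A) (a : A) : wt w (W ++ [a]) = wt w W + w a := by
  simp [EmbeddingOrder.wt]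

lemma length_le_wt (hw : ∀ a, 0 < w a) (W : List A) : W.length ≤ wt w W := by
  induction W with
  | nil => simp
  | cons a W ih =>
    have := hw a
    simp [EmbeddingOrder.wt] at ih ⊢; omega

end comb

section rho
variable {A : Type*} [Fintype A] {w : A → ℕ}

/-- the loop polynomial -/
noncomputable def hh (w : A → ℕ) (S : Set A) (x : ℝ) : ℝ := ∑ a, if a ∈ S then x ^ w a else 0

lemma tsum_eq (S : Set A) (x : ℝ) : ∑' a : S, x ^ w (a : A) = hh w S x := by
  rw [tsum_subtype S (fun a => x ^ w a), tsum_fintype]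
  simp [hh, Set.indicator_apply]

lemma hh_cont (S : Set A) : Continuous (hh w S) := by
  unfold hh
  refine continuous_finset_sum _ fun a _ => ?_
  split_ifs <;> fun_prop

lemma hh_lt {S : Set A} (hw : ∀ a, 0 < w a) (hS : S.Nonempty) {x y : ℝ} (hx : 0 ≤ x) (h : x < y) :
    hh w S x < hh w S y := by
  obtain ⟨b, hb⟩ := hS
  refine Finset.sum_lt_sum (fun a _ => ?_) ⟨b, Finset.mem_univ _, ?_⟩
  · split_ifs
    · gcongr
    · exact le_rfl
  · simp only [hb, if_true]
    exact pow_lt_pow_left₀ h hx (hw b).ne'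

lemma rho_spec (hw : ∀ a, 0 < w a) {S : Set A} {one : A} (h1 : one ∈ S) :
    0 < rhoOf w S ∧ rhoOf w S ≤ 1 ∧ hh w S (rhoOf w S) = 1 := by
  have h0 : hh w S 0 = 0 := by
    unfold hh
    apply Finset.sum_eq_zero
    intro a _
    simp [(hw a).ne']
  have hone : 1 ≤ hh w S 1 := by
    unfold hh
    have := Finset.single_le_sum (f := fun a => if a ∈ S then (1:ℝ) ^ w a else 0)
      (fun a _ => by split_ifs <;> simp) (Finset.mem_univ one)
    simpa [h1] using this
  obtain ⟨r, hr, hr1⟩ := intermediate_value_Icc (zero_le_one (α := ℝ))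
    (hh_cont (w := w) S).continuousOn (show (1:ℝ) ∈ Set.Icc _ _ from ⟨by rw [h0]; simp, hone⟩)
  have hr0 : 0 < r := by
    rcases hr.1.lt_or_eq with h | h
    · exact h
    · rw [← h, h0] at hr1; norm_num at hr1
  have hg : IsGreatest {x : ℝ | 0 ≤ x ∧ ∑' a : S, x ^ w (a : A) ≤ 1} r := by
    refine ⟨⟨hr.1, by rw [tsum_eq, hr1]⟩, ?_⟩
    rintro x ⟨hx0, hx⟩
    rw [tsum_eq] at hx
    by_contra hlt
    have := hh_lt hw ⟨one, h1⟩ hr.1 (not_le.1 hlt)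
    linarith
  have e : rhoOf w S = r := hg.csSup_eq
  rw [e]
  exact ⟨hr0, hr.2, hr1⟩

lemma growth_empty : growthOf w (∅ : Set A) = 0 := by
  have h0 : rhoOf w (∅ : Set A) = 0 := by
    unfold EmbeddingOrder.rhoOf
    apply Real.sSup_of_not_bddAbove
    rintro ⟨b, hb⟩
    have := hb (show max b 0 + 1 ∈ _ from ⟨by positivity, by simp⟩)
    have := le_max_left b 0
    linarith
  simp [EmbeddingOrder.growthOf, h0]

end rho

section main
variable {A : Type*} [Fintype A] {w : A → ℕ} (E : EmbeddingOrder A w) {f : ℕ} (φ : Fin f → List A)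

/-- words of length `m` -/
noncomputable def LW (A : Type*) [Fintype A] : ℕ → Finset (List A)
  | 0 => {[]}
  | m + 1 => (LW A m ×ˢ Finset.univ).image (fun q => q.1 ++ [q.2])

lemma mem_LW (W : List A) : W ∈ LW A W.length := by
  induction W using List.reverseRecOn with
  | nil => simp [LW]
  | append_singleton W a ih =>
    simp only [List.length_append, List.length_singleton, LW, Finset.mem_image, Finset.mem_product]
    exact ⟨(W, a), ⟨ih, Finset.mem_univ _⟩, rfl⟩

lemma LW_length {m : ℕ} {W : List A} (h : W ∈ LW A m) : W.length = m := by
  induction m generalizing W with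
  | zero => simpa [LW] using h
  | succ m ih =>
    simp only [LW, Finset.mem_image, Finset.mem_product] at h
    obtain ⟨⟨V, a⟩, ⟨hV, _⟩, rfl⟩ := h
    simp [ih hV]

lemma sum_LW (g : List A → ℝ) (m : ℕ) :
    ∑ W ∈ LW A (m+1), g W = ∑ W ∈ LW A m, ∑ a, g (W ++ [a]) := by
  rw [LW, Finset.sum_image, Finset.sum_product]
  rintro ⟨W, a⟩ _ ⟨V, b⟩ _ h
  simpa using h

/-- the weighted count -/
noncomputable def G (η ρ t : ℝ) (W : List A) : ℝ :=
  if W ∈ E.Cset φ then η ^ E.nondomWtP φ W * ρ ^ wt w W * t ^ rank E φ W else 0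

lemma G_step {η ρ t : ℝ} (hη : 1 ≤ η) (hρ : 0 < ρ) (hρ1 : ρ ≤ 1) (ht : 0 < t) (ht1 : t ≤ 1)
    (hdom : ∀ X ∈ E.Cset φ, growthOf w (E.stateLoopP φ (E.pstate φ X)) = E.gammaC φ →
      hh w (E.stateLoopP φ (E.pstate φ X)) ρ ≤ 1)
    (hnon : ∀ X ∈ E.Cset φ, growthOf w (E.stateLoopP φ (E.pstate φ X)) ≠ E.gammaC φ →
      hh w (E.stateLoopP φ (E.pstate φ X)) (η * ρ) ≤ 1) (W : List A) :
    ∑ a, G E φ η ρ t (W ++ [a]) ≤ (1 + Fintype.card A * t) * G E φ η ρ t W := by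
  by_cases hW : W ∈ E.Cset φ
  swap
  · have : ∀ a, W ++ [a] ∉ E.Cset φ := fun a h => hW (Cset_down E φ (le_append_self E _ _) h)
    simp [G, hW, this]
  have hη0 : 0 < η := by linarith
  have hG0 : 0 ≤ G E φ η ρ t W := by
    unfold G; split_ifs <;> positivity
  have hGW : G E φ η ρ t W = η ^ E.nondomWtP φ W * ρ ^ wt w W * t ^ rank E φ W := by
    simp [G, hW]
  set S := E.stateLoopP φ (E.pstate φ W) with hS
  set y : ℝ := if growthOf w S = E.gammaC φ then ρ else η * ρ with hy
  have hsum : hh w S y ≤ 1 := by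
    by_cases hg : growthOf w S = E.gammaC φ
    · simp only [hy, hg, if_true]; exact hdom W hW hg
    · simp only [hy, hg, if_false]; exact hnon W hW hg
  have key : ∀ a, G E φ η ρ t (W ++ [a]) ≤ (if a ∈ S then y ^ w a else 0) * G E φ η ρ t W
      + t * G E φ η ρ t W := by
    intro a
    have hy0 : 0 ≤ y := by rw [hy]; split_ifs <;> positivity
    by_cases hC : W ++ [a] ∈ E.Cset φ
    swap
    · have : G E φ η ρ t (W ++ [a]) = 0 := by simp [G, hC]
      rw [this]
      have : 0 ≤ (if a ∈ S then y ^ w a else 0) := by split_ifs <;> positivity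
      positivity
    have e : G E φ η ρ t (W ++ [a]) = η ^ E.nondomWtP φ (W ++ [a]) * ρ ^ wt w (W ++ [a])
        * t ^ rank E φ (W ++ [a]) := by simp [G, hC]
    by_cases ha : a ∈ S
    · have hp : E.pstate φ (W ++ [a]) = E.pstate φ W := (mem_loop_iff E φ W a).1 ha
      have hr : rank E φ (W ++ [a]) = rank E φ W := by simp [rank, hp]
      have : G E φ η ρ t (W ++ [a]) = y ^ w a * G E φ η ρ t W := by
        rw [e, hGW, nd_snoc, wt_snoc, hr]
        by_cases hg : growthOf w S = E.gammaC φ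
        · simp only [hy, hg, ← hS, if_true, ne_eq, not_true, and_false, if_false]
          ring
        · simp only [hy, hg, ← hS, hp, ne_eq, not_false_iff, and_true, if_true, if_false]
          ring
      rw [this]
      simp only [ha, if_true]
      have : 0 ≤ t * G E φ η ρ t W := by positivity
      linarith
    · have hp : E.pstate φ (W ++ [a]) ≠ E.pstate φ W := fun h => ha ((mem_loop_iff E φ W a).2 h)
      have hr := rank_lt E φ W a hp
      simp only [ha, if_false, zero_mul, zero_add]
      rw [e, hGW, nd_snoc, wt_snoc]
      simp only [hp, false_and, if_false, add_zero]
      have h1 : t ^ rank E φ (W ++ [a]) ≤ t ^ (rank E φ W + 1) :=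
        pow_le_pow_of_le_one ht.le ht1 hr
      have h2 : ρ ^ (wt w W + w a) ≤ ρ ^ wt w W :=
        pow_le_pow_of_le_one hρ.le hρ1 (Nat.le_add_right _ _)
      calc η ^ E.nondomWtP φ W * ρ ^ (wt w W + w a) * t ^ rank E φ (W ++ [a])
          ≤ η ^ E.nondomWtP φ W * ρ ^ wt w W * t ^ (rank E φ W + 1) := by gcongr
        _ = _ := by ring
  calc ∑ a, G E φ η ρ t (W ++ [a]) ≤ ∑ a, ((if a ∈ S then y ^ w a else 0) * G E φ η ρ t W
      + t * G E φ η ρ t W) := Finset.sum_le_sum fun a _ => key a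
    _ = hh w S y * G E φ η ρ t W + Fintype.card A * t * G E φ η ρ t W := by
        rw [Finset.sum_add_distrib, ← Finset.sum_mul, hh]
        simp; ring
    _ ≤ 1 * G E φ η ρ t W + Fintype.card A * t * G E φ η ρ t W := by gcongr
    _ = _ := by ring

lemma G_sum {η ρ t : ℝ} (hη : 1 ≤ η) (hρ : 0 < ρ) (hρ1 : ρ ≤ 1) (ht : 0 < t) (ht1 : t ≤ 1)
    (hdom : ∀ X ∈ E.Cset φ, growthOf w (E.stateLoopP φ (E.pstate φ X)) = E.gammaC φ →
      hh w (E.stateLoopP φ (E.pstate φ X)) ρ ≤ 1)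
    (hnon : ∀ X ∈ E.Cset φ, growthOf w (E.stateLoopP φ (E.pstate φ X)) ≠ E.gammaC φ →
      hh w (E.stateLoopP φ (E.pstate φ X)) (η * ρ) ≤ 1) (m : ℕ) :
    ∑ W ∈ LW A m, G E φ η ρ t W ≤ (1 + Fintype.card A * t) ^ m := by
  induction m with
  | zero =>
    simp only [LW, Finset.sum_singleton, pow_zero, G]
    split_ifs
    · have h1 : E.nondomWtP φ [] = 0 := by simp [EmbeddingOrder.nondomWtP]
      have h2 : wt w ([] : List A) = 0 := by simp [EmbeddingOrder.wt]
      rw [h1, h2]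
      simpa using pow_le_one₀ ht.le ht1
    · exact zero_le_one
  | succ m ih =>
    rw [sum_LW, pow_succ']
    calc _ ≤ ∑ W ∈ LW A m, (1 + Fintype.card A * t) * G E φ η ρ t W :=
          Finset.sum_le_sum fun W _ => G_step E φ hη hρ hρ1 ht ht1 hdom hnon W
      _ = (1 + Fintype.card A * t) * ∑ W ∈ LW A m, G E φ η ρ t W := by rw [Finset.mul_sum]
      _ ≤ _ := by gcongr

lemma finite_wt (hw : ∀ a, 0 < w a) (n : ℕ) : {W : List A | wt w W = n}.Finite :=
  (List.finite_length_le A n).subset fun W hW => by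
    have := length_le_wt hw W
    simp only [Set.mem_setOf_eq] at hW ⊢
    omega

lemma bad_bound (hw : ∀ a, 0 < w a) {η ρ : ℝ} (hη : 1 ≤ η) (hρ : 0 < ρ) (hρ1 : ρ ≤ 1)
    (hdom : ∀ X ∈ E.Cset φ, growthOf w (E.stateLoopP φ (E.pstate φ X)) = E.gammaC φ →
      hh w (E.stateLoopP φ (E.pstate φ X)) ρ ≤ 1)
    (hnon : ∀ X ∈ E.Cset φ, growthOf w (E.stateLoopP φ (E.pstate φ X)) ≠ E.gammaC φ →
      hh w (E.stateLoopP φ (E.pstate φ X)) (η * ρ) ≤ 1) (n : ℕ) :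
    (Set.ncard {W : List A | W ∈ E.Cset φ ∧ wt w W = n ∧
          ¬ ((E.nondomWtP φ W : ℝ) < Real.sqrt n)} : ℝ) * (η ^ (Real.sqrt n) * ρ ^ n) ≤
      Real.exp (Fintype.card A) * ((n:ℝ) + 1) ^ ((∑ i, (φ i).length) + 1) := by
  set K := ∑ i, (φ i).length
  set B := {W : List A | W ∈ E.Cset φ ∧ wt w W = n ∧ ¬ ((E.nondomWtP φ W : ℝ) < Real.sqrt n)}
  have hB : B.Finite := (finite_wt hw n).subset fun W hW => hW.2.1
  set t : ℝ := 1 / ((n:ℝ) + 1) with ht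
  have hn : (0:ℝ) < (n:ℝ) + 1 := by positivity
  have ht0 : 0 < t := by positivity
  have ht1 : t ≤ 1 := by
    rw [ht, div_le_one hn]; linarith [Nat.cast_nonneg (α := ℝ) n]
  have hη0 : 0 < η := by linarith
  have hG0 : ∀ W, 0 ≤ G E φ η ρ t W := by
    intro W; unfold G; split_ifs <;> positivity
  have h1 : (B.ncard : ℝ) * (η ^ (Real.sqrt n) * ρ ^ n * t ^ K) ≤
      ∑ W ∈ (Finset.range (n+1)).biUnion (LW A), G E φ η ρ t W := by
    rw [Set.ncard_eq_toFinset_card _ hB, ← nsmul_eq_mul]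
    refine (Finset.card_nsmul_le_sum hB.toFinset (G E φ η ρ t) _ ?_).trans
      (Finset.sum_le_sum_of_subset_of_nonneg ?_ fun W _ _ => hG0 W)
    · intro W hW
      obtain ⟨hC, hwt, hnd⟩ := hB.mem_toFinset.1 hW
      rw [G, if_pos hC, hwt]
      have a1 : η ^ (Real.sqrt n) ≤ η ^ E.nondomWtP φ W := by
        rw [← Real.rpow_natCast η (E.nondomWtP φ W)]
        exact Real.rpow_le_rpow_of_exponent_le hη (not_lt.1 hnd)
      have a2 : t ^ K ≤ t ^ rank E φ W := pow_le_pow_of_le_one ht0.le ht1 (rank_le E φ W)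
      gcongr
    · intro W hW
      obtain ⟨hC, hwt, hnd⟩ := hB.mem_toFinset.1 hW
      have := length_le_wt hw W
      exact Finset.mem_biUnion.2 ⟨W.length, Finset.mem_range.2 (by omega), mem_LW W⟩
  have h2 : ∑ W ∈ (Finset.range (n+1)).biUnion (LW A), G E φ η ρ t W ≤
      ((n:ℝ) + 1) * Real.exp (Fintype.card A) := by
    calc _ ≤ ∑ m ∈ Finset.range (n+1), ∑ W ∈ LW A m, G E φ η ρ t W :=
          le_of_eq (Finset.sum_biUnion fun i _ j _ hij => by
            rw [Function.onFun, Finset.disjoint_left]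
            intro W h h'
            exact hij ((LW_length h).symm.trans (LW_length h')))
      _ ≤ ∑ m ∈ Finset.range (n+1), Real.exp (Fintype.card A) := by
          refine Finset.sum_le_sum fun m hm => ?_
          refine (G_sum E φ hη hρ hρ1 ht0 ht1 hdom hnon m).trans ?_
          have hm' : (m:ℝ) ≤ (n:ℝ) + 1 := by
            have := Finset.mem_range.1 hm
            exact_mod_cast this.le
          calc (1 + Fintype.card A * t) ^ m ≤ (Real.exp (Fintype.card A * t)) ^ m := by
                gcongr
                linarith [Real.add_one_le_exp ((Fintype.card A : ℝ) * t)]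
            _ = Real.exp (m * (Fintype.card A * t)) := by rw [← Real.exp_nat_mul]
            _ ≤ _ := by
                apply Real.exp_le_exp.2
                have : (m:ℝ) * t ≤ 1 := by
                  rw [ht, mul_one_div, div_le_one hn]; exact hm'
                calc (m:ℝ) * (Fintype.card A * t) = Fintype.card A * (m * t) := by ring
                  _ ≤ Fintype.card A * 1 := by gcongr
                  _ = _ := mul_one _
      _ = _ := by simp
  have h3 := h1.trans h2
  have h4 : t ^ K * ((n:ℝ)+1) ^ K = 1 := by
    rw [← mul_pow, ht, one_div, inv_mul_cancel₀ hn.ne', one_pow]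
  calc (B.ncard : ℝ) * (η ^ (Real.sqrt n) * ρ ^ n)
      = (B.ncard : ℝ) * (η ^ (Real.sqrt n) * ρ ^ n * t ^ K) * ((n:ℝ)+1) ^ K := by
        rw [mul_assoc, mul_assoc _ (t^K), h4, mul_one]
    _ ≤ ((n:ℝ) + 1) * Real.exp (Fintype.card A) * ((n:ℝ)+1) ^ K := by gcongr
    _ = _ := by ring

/-- words over `S` of weight `n` -/
def SW (w : A → ℕ) (S : Set A) (n : ℕ) : Set (List A) := {V | (∀ a ∈ V, a ∈ S) ∧ wt w V = n}

lemma SW_fin (hw : ∀ a, 0 < w a) (S : Set A) (n : ℕ) : (SW w S n).Finite :=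
  (finite_wt hw n).subset fun _ h => h.2

lemma SW_rec (hw : ∀ a, 0 < w a) (S : Set A) (n : ℕ) (hn : ∀ a, w a ≤ n) :
    (∑ a, if a ∈ S then (SW w S (n - w a)).ncard else 0) ≤ (SW w S n).ncard := by
  set T : A → Finset (List A) := fun a =>
    if a ∈ S then (SW_fin hw S (n - w a)).toFinset.image (fun V => a :: V) else ∅ with hT
  have hc : ∀ a, (T a).card = if a ∈ S then (SW w S (n - w a)).ncard else 0 := by
    intro a
    by_cases ha : a ∈ S
    · simp only [hT, ha, if_true]
      rw [Finset.card_image_of_injective _ (List.cons_injective),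
        Set.ncard_eq_toFinset_card _ (SW_fin hw S (n - w a))]
    · simp [hT, ha]
  have hmem : ∀ a V, V ∈ T a → ∃ V', V = a :: V' ∧ a ∈ S ∧ V' ∈ SW w S (n - w a) := by
    intro a V hV
    by_cases ha : a ∈ S
    · simp only [hT, ha, if_true, Finset.mem_image, Set.Finite.mem_toFinset] at hV
      obtain ⟨V', h, rfl⟩ := hV
      exact ⟨V', rfl, ha, h⟩
    · simp [hT, ha] at hV
  rw [← Finset.sum_congr rfl (fun a _ => hc a), ← Finset.card_biUnion,
    Set.ncard_eq_toFinset_card _ (SW_fin hw S n)]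
  · apply Finset.card_le_card
    intro V hV
    obtain ⟨a, _, ha⟩ := Finset.mem_biUnion.1 hV
    obtain ⟨V', rfl, haS, hV', hwt⟩ := hmem a V ha
    rw [Set.Finite.mem_toFinset]
    refine ⟨?_, ?_⟩
    · intro b hb
      rcases List.mem_cons.1 hb with rfl | h
      · exact haS
      · exact hV' b h
    · have := hn a
      simp only [EmbeddingOrder.wt, List.map_cons, List.sum_cons] at hwt ⊢
      omega
  · intro a _ b _ hab
    rw [Function.onFun, Finset.disjoint_left]
    intro V h1 h2
    obtain ⟨V1, e1, _⟩ := hmem a V h1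
    obtain ⟨V2, e2, _⟩ := hmem b V h2
    rw [e1] at e2
    exact hab (List.cons.inj e2).1

lemma SW_lower (hw : ∀ a, 0 < w a) {S : Set A} {one : A} (hone : w one = 1) (h1 : one ∈ S)
    (n : ℕ) : rhoOf w S ^ (∑ a, w a) ≤ (SW w S n).ncard * rhoOf w S ^ n := by
  obtain ⟨hr0, hr1, hr⟩ := rho_spec hw h1
  set ρ := rhoOf w S
  have hM : ∀ a, w a ≤ ∑ a, w a := fun a =>
    Finset.single_le_sum (f := w) (fun _ _ => Nat.zero_le _) (Finset.mem_univ a)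
  set M := ∑ a, w a
  induction n using Nat.strong_induction_on with
  | _ n ih =>
  by_cases hn : n ≤ M
  · have hmem : List.replicate n one ∈ SW w S n := by
      refine ⟨fun a ha => by rw [List.eq_of_mem_replicate ha]; exact h1, ?_⟩
      simp [EmbeddingOrder.wt, hone]
    have : 1 ≤ (SW w S n).ncard := (Set.ncard_pos (SW_fin hw S n)).2 ⟨_, hmem⟩
    have h2 : (1:ℝ) ≤ (SW w S n).ncard := by exact_mod_cast this
    calc ρ ^ M ≤ ρ ^ n := pow_le_pow_of_le_one hr0.le hr1 hn
      _ = 1 * ρ ^ n := (one_mul _).symm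
      _ ≤ _ := by gcongr
  · have hn' : ∀ a, w a ≤ n := fun a => (hM a).trans (by omega)
    have hrec := SW_rec hw S n hn'
    have hrec' : (∑ a, if a ∈ S then ((SW w S (n - w a)).ncard : ℝ) else 0) ≤
        (SW w S n).ncard := by exact_mod_cast hrec
    calc ρ ^ M = hh w S ρ * ρ ^ M := by rw [hr, one_mul]
      _ = ∑ a, (if a ∈ S then ρ ^ w a * ρ ^ M else 0) := by
        rw [hh, Finset.sum_mul]; simp only [ite_mul, zero_mul]
      _ ≤ ∑ a, (if a ∈ S then ((SW w S (n - w a)).ncard : ℝ) else 0) * ρ ^ n := by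
        refine Finset.sum_le_sum fun a _ => ?_
        split_ifs
        · have := ih (n - w a) (by have := hw a; have := hn' a; omega)
          calc ρ ^ w a * ρ ^ M ≤ ρ ^ w a * ((SW w S (n - w a)).ncard * ρ ^ (n - w a)) := by gcongr
            _ = (SW w S (n - w a)).ncard * (ρ ^ w a * ρ ^ (n - w a)) := by ring
            _ = _ := by rw [← pow_add, Nat.add_sub_cancel' (hn' a)]
        · simp
      _ ≤ _ := by rw [← Finset.sum_mul]; gcongr

lemma SW_le_C (hw : ∀ a, 0 < w a) {X : List A} (hX : X ∈ E.Cset φ) (n : ℕ) :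
    (SW w (E.stateLoopP φ (E.pstate φ X)) n).ncard ≤
      Set.ncard {W : List A | W ∈ E.Cset φ ∧ wt w W = n} := by
  apply Set.ncard_le_ncard _ ((finite_wt hw n).subset fun W hW => hW.2)
  intro V hV
  refine ⟨Cset_down E φ (le_append_self' E X V) ?_, hV.2⟩
  rw [mem_Cset_iff, pstate_append_loop E φ X V hV.1, ← mem_Cset_iff]
  exact hX

lemma exists_loop (hunb : ¬ ∃ M : ℕ, ∀ n : ℕ,
      Set.ncard {W : List A | W ∈ E.Cset φ ∧ EmbeddingOrder.wt w W = n} ≤ M) :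
    ∃ X ∈ E.Cset φ, (E.stateLoopP φ (E.pstate φ X)).Nonempty := by
  by_contra hcon
  push Not at hcon
  apply hunb
  have hlen : ∀ W ∈ E.Cset φ, W.length ≤ rank E φ W := by
    intro W
    induction W using List.reverseRecOn with
    | nil => simp
    | append_singleton W a ih =>
      intro hC
      have hW := Cset_down E φ (le_append_self E W [a]) hC
      have hne : E.pstate φ (W ++ [a]) ≠ E.pstate φ W := by
        intro h
        have := (mem_loop_iff E φ W a).2 h
        rw [hcon W hW] at this
        exact this
      have := rank_lt E φ W a hne
      have := ih hW
      simp; omega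
  have hfin := List.finite_length_le A (∑ i, (φ i).length)
  refine ⟨_, fun n => Set.ncard_le_ncard ?_ hfin⟩
  rintro W ⟨hC, _⟩
  exact (hlen W hC).trans (rank_le E φ W)

lemma nil_mem (hφne : ∀ i, φ i ≠ []) : ([] : List A) ∈ E.Cset φ := by
  intro i hi
  have := E.weight_lt hi (hφne i)
  simp at this

lemma gamma_attained (hφne : ∀ i, φ i ≠ []) :
    (∃ X ∈ E.Cset φ, E.gammaC φ = growthOf w (E.stateLoopP φ (E.pstate φ X))) ∧
    ∀ X ∈ E.Cset φ, growthOf w (E.stateLoopP φ (E.pstate φ X)) ≤ E.gammaC φ := by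
  set T := {g : ℝ | ∃ X ∈ E.Cset φ, g = growthOf w (E.stateLoopP φ (E.pstate φ X))} with hT
  have hfin : T.Finite := by
    apply (Set.finite_range (fun S : Set A => growthOf w S)).subset
    rintro g ⟨X, _, rfl⟩
    exact ⟨_, rfl⟩
  have hne : T.Nonempty := ⟨_, [], nil_mem E φ hφne, rfl⟩
  exact ⟨hne.csSup_mem hfin, fun X hX => le_csSup hfin.bddAbove ⟨X, hX, rfl⟩⟩

lemma poly_exp (b : ℝ) (hb : 0 < b) (k : ℕ) : ∃ c : ℝ, 0 < c ∧ ∀ n : ℕ,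
    ((n:ℝ) + 1) ^ k ≤ c * Real.exp (b * Real.sqrt n) := by
  refine ⟨(2 * k).factorial * Real.exp b / b ^ (2 * k), by positivity, fun n => ?_⟩
  have h := Real.pow_div_factorial_le_exp (b * (Real.sqrt n + 1)) (by positivity) (2 * k)
  rw [div_le_iff₀ (by positivity)] at h
  have hs : (n:ℝ) + 1 ≤ (Real.sqrt n + 1) ^ 2 := by
    have := Real.sq_sqrt (Nat.cast_nonneg (α := ℝ) n)
    have := Real.sqrt_nonneg (n:ℝ)
    nlinarith
  calc ((n:ℝ) + 1) ^ k ≤ ((Real.sqrt n + 1) ^ 2) ^ k := by gcongr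
    _ = (b * (Real.sqrt n + 1)) ^ (2 * k) / b ^ (2 * k) := by
      rw [mul_pow, ← pow_mul]; field_simp
    _ ≤ Real.exp (b * (Real.sqrt n + 1)) * (2 * k).factorial / b ^ (2 * k) := by gcongr
    _ = _ := by rw [mul_add, mul_one, Real.exp_add]; ring

end main
end NonDom

open NonDom


/-- **Lemma `lem-nondom`.**  Let `W` be a uniformly random word from `C_n`.  With
probability `1 − 2^{−Ω(√n)}`, the total weight of the non-dominant loop blocks in the
prefix decomposition of `W` is smaller than `√n`.  (Stated by counting: the number of
weight-`n` words of `C` failing this is at most `c·2^{−δ√n}·|C_n|`.) -/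
theorem nondominant_weight_small {A : Type*} [Fintype A] {w : A → ℕ}
    (E : EmbeddingOrder A w) {f : ℕ} (φ : Fin f → List A)
    (hw : ∀ a, 0 < w a)
    (one : A) (hone : w one = 1) (hone_le : ∀ a : A, E.le [one] [a])
    (hf : 0 < f) (hφne : ∀ i, φ i ≠ [])
    (hφmin : ∀ i ψ, E.le ψ (φ i) → ψ ≠ φ i → ψ ∈ E.Cset φ)
    (hunb : ¬ ∃ M : ℕ, ∀ n : ℕ,
      Set.ncard {W : List A | W ∈ E.Cset φ ∧ EmbeddingOrder.wt w W = n} ≤ M)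
    : ∃ c δ : ℝ, 0 < c ∧ 0 < δ ∧ ∀ n : ℕ,
      (Set.ncard {W : List A | W ∈ E.Cset φ ∧ wt w W = n ∧
          ¬ ((E.nondomWtP φ W : ℝ) < Real.sqrt n)} : ℝ)
        ≤ c * 2 ^ (-δ * Real.sqrt n) *
          (Set.ncard {W : List A | W ∈ E.Cset φ ∧ wt w W = n} : ℝ) := by
  obtain ⟨⟨X, hX, hγ⟩, hmax⟩ := gamma_attained E φ hφne
  obtain ⟨X0, hX0, hne0⟩ := exists_loop E φ hunb
  have hspec : ∀ S : Set A, one ∈ S → _ := fun S hS => rho_spec hw hS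
  have hγ0 : 0 < E.gammaC φ := by
    refine lt_of_lt_of_le ?_ (hmax X0 hX0)
    exact inv_pos.2 (hspec _ (one_mem_loop E φ hone_le X0 hne0)).1
  have hne : (E.stateLoopP φ (E.pstate φ X)).Nonempty := by
    rw [Set.nonempty_iff_ne_empty]
    intro h
    rw [hγ, h, growth_empty] at hγ0
    exact lt_irrefl _ hγ0
  have h1 := one_mem_loop E φ hone_le X hne
  obtain ⟨hρ0, hρ1, hρ⟩ := hspec _ h1
  set ρ := rhoOf w (E.stateLoopP φ (E.pstate φ X)) with hρdef
  have hγρ : E.gammaC φ = ρ⁻¹ := hγ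
  have hdom : ∀ Y ∈ E.Cset φ, growthOf w (E.stateLoopP φ (E.pstate φ Y)) = E.gammaC φ →
      hh w (E.stateLoopP φ (E.pstate φ Y)) ρ ≤ 1 := by
    intro Y hY hg
    have hYne : (E.stateLoopP φ (E.pstate φ Y)).Nonempty := by
      rw [Set.nonempty_iff_ne_empty]
      intro h
      rw [h, growth_empty] at hg
      exact hγ0.ne hg
    obtain ⟨_, _, h⟩ := hspec _ (one_mem_loop E φ hone_le Y hYne)
    rw [hγρ] at hg
    rw [← inv_injective hg]
    exact h.le
  have hev : ∀ᶠ η : ℝ in nhdsWithin 1 (Set.Ioi 1), ∀ S : Set A,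
      hh w S ρ < 1 → hh w S (η * ρ) < 1 := by
    rw [eventually_all]
    intro S
    by_cases hS : hh w S ρ < 1
    · have hc : Continuous fun η : ℝ => hh w S (η * ρ) :=
        (hh_cont S).comp (continuous_id.mul continuous_const)
      have : ∀ᶠ η : ℝ in nhds 1, hh w S (η * ρ) < 1 :=
        hc.continuousAt.eventually_lt continuousAt_const (by simpa using hS)
      filter_upwards [nhdsWithin_le_nhds this] with η h _ using h
    · exact Eventually.of_forall fun η h => absurd h hS
  obtain ⟨η, hη, hη1⟩ := (hev.and self_mem_nhdsWithin).exists
  replace hη1 : (1:ℝ) < η := hη1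
  have hnon : ∀ Y ∈ E.Cset φ, growthOf w (E.stateLoopP φ (E.pstate φ Y)) ≠ E.gammaC φ →
      hh w (E.stateLoopP φ (E.pstate φ Y)) (η * ρ) ≤ 1 := by
    intro Y hY hg
    apply le_of_lt
    apply hη
    rcases Set.eq_empty_or_nonempty (E.stateLoopP φ (E.pstate φ Y)) with h | h
    · rw [h]; simp [hh]
    · obtain ⟨hr0, _, hr⟩ := hspec _ (one_mem_loop E φ hone_le Y h)
      rw [← hr]
      apply hh_lt hw h hρ0.le
      have hlt := lt_of_le_of_ne (hmax Y hY) hg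
      rw [hγρ] at hlt
      exact (inv_lt_inv₀ hr0 hρ0).1 hlt
  have hη0 : 0 < η := by linarith
  have hlog : 0 < Real.log η := Real.log_pos hη1
  set b := Real.log η / 2 with hb
  have hb0 : 0 < b := by positivity
  obtain ⟨c, hc0, hc⟩ := poly_exp b hb0 ((∑ i, (φ i).length) + 1)
  have hlog2 : 0 < Real.log 2 := Real.log_pos one_lt_two
  refine ⟨Real.exp (Fintype.card A) * c / ρ ^ (∑ a, w a), b / Real.log 2, by positivity,
    by positivity, fun n => ?_⟩
  have hbad := bad_bound E φ hw hη1.le hρ0 hρ1 hdom hnon n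
  have hlow := SW_lower hw hone h1 n
  rw [← hρdef] at hlow
  have hle : ((SW w (E.stateLoopP φ (E.pstate φ X)) n).ncard : ℝ) ≤
    (Set.ncard {W : List A | W ∈ E.Cset φ ∧ wt w W = n} : ℝ) := by
    exact_mod_cast SW_le_C E φ hw hX n
  set Bn := (Set.ncard {W : List A | W ∈ E.Cset φ ∧ wt w W = n ∧
          ¬ ((E.nondomWtP φ W : ℝ) < Real.sqrt n)} : ℝ)
  set Cn := (Set.ncard {W : List A | W ∈ E.Cset φ ∧ wt w W = n} : ℝ)
  set s := Real.sqrt n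
  have e1 : η ^ s = Real.exp (b * s) * Real.exp (b * s) := by
    rw [Real.rpow_def_of_pos hη0, ← Real.exp_add]; congr 1; rw [hb]; ring
  have e2 : (2:ℝ) ^ (-(b / Real.log 2) * s) = (Real.exp (b * s))⁻¹ := by
    rw [Real.rpow_def_of_pos two_pos, ← Real.exp_neg]; congr 1; field_simp
  rw [e1] at hbad
  rw [e2]
  have hcn := hc n
  set x := Real.exp (b * s)
  have hx : 0 < x := Real.exp_pos _
  set M := ∑ a, w a
  have hCn : ρ ^ M ≤ Cn * ρ ^ n := hlow.trans (by gcongr)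
  have h5 : Bn * (x * x * ρ ^ n) ≤ Real.exp (Fintype.card A) * (c * x) :=
    hbad.trans (by gcongr)
  have hpM : 0 < ρ ^ M := by positivity
  have hpn : 0 < ρ ^ n := by positivity
  have h6 : Bn * (x * x * ρ ^ n) * ρ ^ M ≤ Real.exp (Fintype.card A) * (c * x) * (Cn * ρ ^ n) := by
    gcongr
  have h7 : Real.exp (Fintype.card A) * c / ρ ^ M * x⁻¹ * Cn =
      (Real.exp (Fintype.card A) * (c * x) * (Cn * ρ ^ n)) / (x * x * ρ ^ n * ρ ^ M) := by
    field_simp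
  rw [h7, le_div_iff₀ (by positivity)]
  calc _ = Bn * (x * x * ρ ^ n) * ρ ^ M := by ring
    _ ≤ _ := h6
end

section
/- Let X be a word with d_X dominant loop blocks in its prefix decomposition, and let Y be a word with d_Y dominant loop blocks in its suffix decomposition. If the concatenation XY is in C, then d_X + d_Y ≤ D + 1. -/
open Filter Asymptotics
open scoped Classical

namespace EmbeddingOrder

section Words

variable {A : Type*} {w : A → ℕ} (E : EmbeddingOrder A w) {f : ℕ} (φ : Fin f → List A)

theorem le_append_iff (U X Y : List A) :
    E.le U (X ++ Y) ↔ ∃ U1 U2, U = U1 ++ U2 ∧ E.le U1 X ∧ E.le U2 Y := by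
  constructor
  · intro h
    obtain ⟨Ws, hl, hfl, hq⟩ := (E.le_iff_factor _ _).1 h
    rw [List.length_append] at hl
    have hlen : (Ws.take X.length).length = X.length := by
      rw [List.length_take]; omega
    have hz : Ws.zip (X ++ Y) = (Ws.take X.length).zip X ++ (Ws.drop X.length).zip Y := by
      conv_lhs => rw [← List.take_append_drop X.length Ws]
      exact List.zip_append hlen
    refine ⟨(Ws.take X.length).flatten, (Ws.drop X.length).flatten, ?_, ?_, ?_⟩
    · rw [← List.flatten_append, List.take_append_drop, hfl]
    · exact (E.le_iff_factor _ _).2 ⟨_, hlen, rfl, fun q h' => hq q (by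
        rw [hz]; exact List.mem_append_left _ h')⟩
    · exact (E.le_iff_factor _ _).2 ⟨_, by rw [List.length_drop]; omega, rfl, fun q h' => hq q (by
        rw [hz]; exact List.mem_append_right _ h')⟩
  · rintro ⟨U1, U2, rfl, h1, h2⟩
    obtain ⟨W1, hl1, rfl, hq1⟩ := (E.le_iff_factor _ _).1 h1
    obtain ⟨W2, hl2, rfl, hq2⟩ := (E.le_iff_factor _ _).1 h2
    refine (E.le_iff_factor _ _).2 ⟨W1 ++ W2, by simp [hl1, hl2], by simp, ?_⟩
    intro q h
    rw [List.zip_append hl1] at h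
    rcases List.mem_append.1 h with h | h
    · exact hq1 q h
    · exact hq2 q h

theorem le_append_left (X Y : List A) : E.le X (X ++ Y) :=
  (E.le_append_iff _ _ _).2 ⟨X, [], by simp, E.le_refl _, E.nil_le _⟩

theorem le_append_right (X Y : List A) : E.le Y (X ++ Y) :=
  (E.le_append_iff _ _ _).2 ⟨[], Y, by simp, E.nil_le _, E.le_refl _⟩

theorem Cset_left {X Y : List A} (h : X ++ Y ∈ E.Cset φ) : X ∈ E.Cset φ :=
  fun i hi => h i (E.le_trans hi (E.le_append_left _ _))

theorem le_pstate_iff (W : List A) (i : Fin f) (q : ℕ) :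
    q ≤ E.pstate φ W i ↔ q ≤ (φ i).length ∧ E.le ((φ i).take q) W := by
  have hb : BddAbove {p | p ≤ (φ i).length ∧ E.le ((φ i).take p) W} :=
    ⟨(φ i).length, fun p hp => hp.1⟩
  have hne : {p | p ≤ (φ i).length ∧ E.le ((φ i).take p) W}.Nonempty :=
    ⟨0, by simp [E.nil_le]⟩
  constructor
  · intro h
    have hm := Nat.sSup_mem hne hb
    refine ⟨h.trans hm.1, E.le_trans ?_ hm.2⟩
    have : (φ i).take q <+: (φ i).take (E.pstate φ W i) := List.take_prefix_take_left h
    obtain ⟨t, ht⟩ := this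
    change E.le _ ((φ i).take (E.pstate φ W i))
    rw [← ht]
    exact E.le_append_left _ _
  · intro h
    exact le_csSup hb h

theorem le_sstate_iff (W : List A) (i : Fin f) (q : ℕ) :
    q ≤ E.sstate φ W i ↔
      q ≤ (φ i).length ∧ E.le ((φ i).drop ((φ i).length - q)) W := by
  have hb : BddAbove {p | p ≤ (φ i).length ∧ E.le ((φ i).drop ((φ i).length - p)) W} :=
    ⟨(φ i).length, fun p hp => hp.1⟩
  have hne : {p | p ≤ (φ i).length ∧ E.le ((φ i).drop ((φ i).length - p)) W}.Nonempty :=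
    ⟨0, by simp [E.nil_le]⟩
  constructor
  · intro h
    have hm := Nat.sSup_mem hne hb
    refine ⟨h.trans hm.1, E.le_trans ?_ hm.2⟩
    have : (φ i).drop ((φ i).length - q) <:+ (φ i).drop ((φ i).length - E.sstate φ W i) :=
      List.drop_suffix_drop_left _ (by omega)
    obtain ⟨t, ht⟩ := this
    change E.le _ ((φ i).drop ((φ i).length - E.sstate φ W i))
    rw [← ht]
    exact E.le_append_right _ _
  · intro h
    exact le_csSup hb h

theorem pstate_mono (X V : List A) : E.pstate φ X ≤ E.pstate φ (X ++ V) := by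
  intro i
  rw [le_pstate_iff]
  have h := (E.le_pstate_iff φ X i _).1 le_rfl
  exact ⟨h.1, E.le_trans h.2 (E.le_append_left _ _)⟩

theorem pstate_le_length (X : List A) : E.pstate φ X ≤ fun i => (φ i).length :=
  fun i => ((E.le_pstate_iff φ X i _).1 le_rfl).1

theorem pstate_append_le {X X' : List A} (V : List A) (h : E.pstate φ X ≤ E.pstate φ X') :
    E.pstate φ (X ++ V) ≤ E.pstate φ (X' ++ V) := by
  intro i
  rw [le_pstate_iff]
  obtain ⟨h1, h2⟩ := (E.le_pstate_iff φ (X ++ V) i _).1 le_rfl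
  refine ⟨h1, ?_⟩
  obtain ⟨U1, U2, hU, hX, hV⟩ := (E.le_append_iff _ _ _).1 h2
  refine (E.le_append_iff _ _ _).2 ⟨U1, U2, hU, ?_, hV⟩
  have hp : U1 <+: φ i := (List.prefix_append U1 U2).trans (hU ▸ List.take_prefix _ _)
  have he := List.prefix_iff_eq_take.1 hp
  have h3 : U1.length ≤ E.pstate φ X i :=
    (E.le_pstate_iff φ X i _).2 ⟨hp.length_le, he ▸ hX⟩
  have h4 := (E.le_pstate_iff φ X' i _).1 (h3.trans (h i))
  rw [he]
  exact h4.2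

theorem pstate_append_congr {X X' : List A} (V : List A) (h : E.pstate φ X = E.pstate φ X') :
    E.pstate φ (X ++ V) = E.pstate φ (X' ++ V) :=
  _root_.le_antisymm (E.pstate_append_le φ V h.le) (E.pstate_append_le φ V h.ge)

theorem Cset_of_sstate {X Y Y' : List A} (h : E.sstate φ Y' = E.sstate φ Y)
    (hXY : X ++ Y ∈ E.Cset φ) : X ++ Y' ∈ E.Cset φ := by
  intro i hi
  apply hXY i
  obtain ⟨U1, U2, hU, hX, hV⟩ := (E.le_append_iff _ _ _).1 hi
  refine (E.le_append_iff _ _ _).2 ⟨U1, U2, hU, hX, ?_⟩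
  have hs : U2 <:+ φ i := hU ▸ List.suffix_append U1 U2
  have he := List.suffix_iff_eq_drop.1 hs
  have h3 : U2.length ≤ E.sstate φ Y' i :=
    (E.le_sstate_iff φ Y' i _).2 ⟨hs.length_le, he ▸ hV⟩
  rw [h] at h3
  have h4 := (E.le_sstate_iff φ Y i _).1 h3
  rw [he]
  exact h4.2

theorem sstate_append_le {X X' : List A} (V : List A) (h : E.sstate φ X ≤ E.sstate φ X') :
    E.sstate φ (V ++ X) ≤ E.sstate φ (V ++ X') := by
  intro i
  rw [le_sstate_iff]
  obtain ⟨h1, h2⟩ := (E.le_sstate_iff φ (V ++ X) i _).1 le_rfl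
  refine ⟨h1, ?_⟩
  obtain ⟨U1, U2, hU, hV, hX⟩ := (E.le_append_iff _ _ _).1 h2
  refine (E.le_append_iff _ _ _).2 ⟨U1, U2, hU, hV, ?_⟩
  have hp : U2 <:+ φ i := (List.suffix_append U1 U2).trans (hU ▸ List.drop_suffix _ _)
  have he := List.suffix_iff_eq_drop.1 hp
  have h3 : U2.length ≤ E.sstate φ X i :=
    (E.le_sstate_iff φ X i _).2 ⟨hp.length_le, he ▸ hX⟩
  have h4 := (E.le_sstate_iff φ X' i _).1 (h3.trans (h i))
  rw [he]
  exact h4.2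

theorem sstate_append_congr {X X' : List A} (V : List A) (h : E.sstate φ X = E.sstate φ X') :
    E.sstate φ (V ++ X) = E.sstate φ (V ++ X') :=
  _root_.le_antisymm (E.sstate_append_le φ V h.le) (E.sstate_append_le φ V h.ge)

/-- A letter fixing the state of one word is a loop symbol of that state. -/
theorem mem_stateLoopP_iff (X : List A) (a : A) :
    a ∈ E.stateLoopP φ (E.pstate φ X) ↔ E.pstate φ (X ++ [a]) = E.pstate φ X := by
  refine ⟨fun h => h X rfl, fun h X' h' => ?_⟩
  rw [E.pstate_append_congr φ [a] h', h]

theorem mem_stateLoopS_iff (Y : List A) (a : A) :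
    a ∈ E.stateLoopS φ (E.sstate φ Y) ↔ E.sstate φ (a :: Y) = E.sstate φ Y := by
  refine ⟨fun h => h Y rfl, fun h Y' h' => ?_⟩
  have := E.sstate_append_congr φ [a] h'
  simp only [List.singleton_append] at this
  rw [this, h]

theorem sstate_block (Y B : List A) (h : ∀ a ∈ B, a ∈ E.stateLoopS φ (E.sstate φ Y)) :
    E.sstate φ (B ++ Y) = E.sstate φ Y := by
  induction B with
  | nil => rfl
  | cons a B ih =>
    have h1 := ih fun b hb => h b (List.mem_cons_of_mem _ hb)
    exact h a (by simp) (B ++ Y) h1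

/-- If the states of `Z` and `Z ++ B` agree, all letters of `B` are loop symbols. -/
theorem loop_of_eq (Z B : List A) (h : E.pstate φ (Z ++ B) = E.pstate φ Z) :
    ∀ a ∈ B, a ∈ E.stateLoopP φ (E.pstate φ Z) := by
  intro a ha
  obtain ⟨U, V, rfl⟩ := List.append_of_mem ha
  have h1 := E.pstate_mono φ Z U
  have h2 := E.pstate_mono φ (Z ++ U) [a]
  have h3 := E.pstate_mono φ (Z ++ U ++ [a]) V
  have h4 : Z ++ U ++ [a] ++ V = Z ++ (U ++ a :: V) := by simp
  rw [h4, h] at h3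
  have e1 : E.pstate φ (Z ++ U) = E.pstate φ Z := _root_.le_antisymm (h2.trans h3) h1
  rw [← e1, mem_stateLoopP_iff]
  exact _root_.le_antisymm ((h3.trans e1.ge)) h2

theorem block_aux (S : List A) (n : ℕ) : ∀ Z : List A,
    (∃ V, V <+: (List.replicate n S).flatten ∧
      ∀ a ∈ S, a ∈ E.stateLoopP φ (E.pstate φ (Z ++ V))) ∨
    n + ∑ i, E.pstate φ Z i ≤ ∑ i, E.pstate φ (Z ++ (List.replicate n S).flatten) i := by
  induction n with
  | zero => intro Z; right; simp
  | succ n ih =>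
    intro Z
    by_cases h : E.pstate φ (Z ++ S) = E.pstate φ Z
    · left
      exact ⟨[], List.nil_prefix, by simpa using E.loop_of_eq φ Z S h⟩
    · have hlt : E.pstate φ Z < E.pstate φ (Z ++ S) :=
        lt_of_le_of_ne (E.pstate_mono φ Z S) (Ne.symm h)
      have hs : ∑ i, E.pstate φ Z i < ∑ i, E.pstate φ (Z ++ S) i := by
        obtain ⟨hle, i, hi⟩ := Pi.lt_def.1 hlt
        exact Finset.sum_lt_sum (fun i _ => hle i) ⟨i, Finset.mem_univ _, hi⟩
      rw [List.replicate_succ, List.flatten_cons]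
      rcases ih (Z ++ S) with ⟨V, hV, hl⟩ | h2
      · left
        refine ⟨S ++ V, (List.prefix_append_right_inj S).2 hV, ?_⟩
        rwa [← List.append_assoc]
      · right
        rw [← List.append_assoc]
        omega

/-- There is a block over `S` forcing the prefix scan into a state all of `S` loops at. -/
theorem exists_block (S : List A) : ∃ B : List A, (∀ a ∈ B, a ∈ S) ∧
    ∀ Z : List A, ∃ V, V <+: B ∧ ∀ a ∈ S, a ∈ E.stateLoopP φ (E.pstate φ (Z ++ V)) := by
  refine ⟨(List.replicate (∑ i, (φ i).length + 1) S).flatten, ?_, fun Z => ?_⟩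
  · intro a ha
    obtain ⟨l, hl, hal⟩ := List.mem_flatten.1 ha
    rwa [List.eq_of_mem_replicate hl] at hal
  · rcases E.block_aux φ S (∑ i, (φ i).length + 1) Z with h | h
    · exact h
    · exfalso
      have := Finset.sum_le_sum fun i (_ : i ∈ Finset.univ) => E.pstate_le_length φ
        (Z ++ (List.replicate (∑ i, (φ i).length + 1) S).flatten) i
      omega

end Words

section Growth

variable {A : Type*} [Fintype A] {w : A → ℕ}

theorem growthOf_empty : growthOf w (∅ : Set A) = 0 := by
  have : ¬ BddAbove {x : ℝ | 0 ≤ x ∧ ∑' a : (∅ : Set A), x ^ w (a : A) ≤ 1} := by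
    rintro ⟨b, hb⟩
    have := hb (show |b| + 1 ∈ _ from ⟨by positivity, by simp⟩)
    linarith [le_abs_self b]
  rw [growthOf, rhoOf, Real.sSup_of_not_bddAbove this, inv_zero]

theorem rho_bdd (hw : ∀ a, 0 < w a) {S : Set A} (hS : S.Nonempty) :
    BddAbove {x : ℝ | 0 ≤ x ∧ ∑' a : S, x ^ w (a : A) ≤ 1} := by
  obtain ⟨a, ha⟩ := hS
  refine ⟨1, fun x hx => ?_⟩
  by_contra hc
  push Not at hc
  have h2 := hx.2
  rw [tsum_fintype] at h2
  have h1 : x ^ w a ≤ ∑ b : S, x ^ w (b : A) :=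
    Finset.single_le_sum (f := fun b : S => x ^ w (b : A))
      (fun b _ => pow_nonneg hx.1 _) (Finset.mem_univ ⟨a, ha⟩)
  have h3 := one_lt_pow₀ hc (hw a).ne'
  linarith

theorem rho_exists_gt {S : Set A} {r : ℝ} (hr : 0 ≤ r)
    (h : ∑' a : S, r ^ w (a : A) < 1) : ∃ x, r < x ∧ ∑' a : S, x ^ w (a : A) ≤ 1 := by
  simp only [tsum_fintype] at *
  have hc : Continuous fun x : ℝ => ∑ a : S, x ^ w (a : A) := by fun_prop
  have he := (hc.tendsto r).eventually (gt_mem_nhds h)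
  have he2 : ∀ᶠ x in nhdsWithin r (Set.Ioi r), ∑ a : S, x ^ w (a : A) < 1 :=
    nhdsWithin_le_nhds he
  obtain ⟨x, hx1, hx2⟩ := (he2.and self_mem_nhdsWithin).exists
  exact ⟨x, hx2, hx1.le⟩

theorem rho_pos (hw : ∀ a, 0 < w a) {S : Set A} (hS : S.Nonempty) : 0 < rhoOf w S := by
  have h0 : ∑' a : S, (0 : ℝ) ^ w (a : A) < 1 := by
    rw [tsum_fintype, Finset.sum_eq_zero]
    · norm_num
    · intro a _
      exact zero_pow (hw a).ne'
  obtain ⟨x, hx, hx1⟩ := rho_exists_gt le_rfl h0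
  exact hx.trans_le (le_csSup (rho_bdd hw hS) ⟨hx.le, hx1⟩)

theorem rho_mem (hw : ∀ a, 0 < w a) {S : Set A} (hS : S.Nonempty) :
    ∑' a : S, (rhoOf w S) ^ w (a : A) ≤ 1 := by
  have hcl : IsClosed {x : ℝ | 0 ≤ x ∧ ∑' a : S, x ^ w (a : A) ≤ 1} := by
    simp only [tsum_fintype]
    exact (isClosed_le continuous_const continuous_id).inter
      (isClosed_le (continuous_finsetSum _ fun a _ => continuous_pow _) continuous_const)
  have hne : {x : ℝ | 0 ≤ x ∧ ∑' a : S, x ^ w (a : A) ≤ 1}.Nonempty := by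
    refine ⟨0, le_rfl, ?_⟩
    rw [tsum_fintype, Finset.sum_eq_zero]
    · norm_num
    · intro a _
      exact zero_pow (hw a).ne'
  exact (hcl.csSup_mem hne (rho_bdd hw hS)).2

theorem growthOf_strictMono (hw : ∀ a, 0 < w a) {S T : Set A} (h : S ⊂ T) :
    growthOf w S < growthOf w T := by
  have hT : T.Nonempty := by
    obtain ⟨a, ha, -⟩ := Set.exists_of_ssubset h
    exact ⟨a, ha⟩
  have hTp := rho_pos hw hT
  rcases S.eq_empty_or_nonempty with rfl | hS
  · rw [growthOf_empty]
    exact inv_pos.2 hTp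
  · have hlt : ∑' a : S, (rhoOf w T) ^ w (a : A) < 1 := by
      refine lt_of_lt_of_le ?_ (rho_mem hw hT)
      obtain ⟨a, ha, hna⟩ := Set.exists_of_ssubset h
      rw [tsum_fintype, tsum_fintype,
        ← Finset.sum_subtype (s := S.toFinset) (p := (· ∈ S)) (by simp)
          (fun a => (rhoOf w T) ^ w a),
        ← Finset.sum_subtype (s := T.toFinset) (p := (· ∈ T)) (by simp)
          (fun a => (rhoOf w T) ^ w a)]
      exact Finset.sum_lt_sum_of_subset (Set.toFinset_subset_toFinset.2 h.1)
        (by simpa using ha) (by simpa using hna) (by positivity) (fun _ _ _ => by positivity)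
    obtain ⟨x, hx, hx1⟩ := rho_exists_gt hTp.le hlt
    have : rhoOf w T < rhoOf w S :=
      hx.trans_le (le_csSup (rho_bdd hw hS) ⟨hTp.le.trans hx.le, hx1⟩)
    exact inv_strictAnti₀ hTp this

variable (E : EmbeddingOrder A w) {f : ℕ} (φ : Fin f → List A)

theorem growth_le_gamma {X : List A} (hX : X ∈ E.Cset φ) :
    growthOf w (E.stateLoopP φ (E.pstate φ X)) ≤ E.gammaC φ := by
  refine le_csSup ?_ ⟨X, hX, rfl⟩
  refine ((Set.finite_range fun S : Set A => growthOf w S).subset ?_).bddAbove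
  rintro g ⟨X, -, rfl⟩
  exact ⟨_, rfl⟩

theorem loop_eq_of_subset (hw : ∀ a, 0 < w a) {X : List A} (hX : X ∈ E.Cset φ) {S : Set A}
    (hS : growthOf w S = E.gammaC φ) (hsub : S ⊆ E.stateLoopP φ (E.pstate φ X)) :
    S = E.stateLoopP φ (E.pstate φ X) := by
  by_contra hne
  have h1 := growthOf_strictMono hw (hsub.ssubset_of_ne hne)
  have h2 := E.growth_le_gamma φ hX
  linarith

/-- Dominant prefix states met while reading `U` after `Z`. -/
def domP (Z U : List A) : Set (Fin f → ℕ) :=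
  {p | (∃ V, V <+: U ∧ E.pstate φ (Z ++ V) = p) ∧
    growthOf w (E.stateLoopP φ p) = E.gammaC φ}

/-- Dominant suffix states met while reading `W` from the right. -/
def domS (W : List A) : Set (Fin f → ℕ) :=
  {s | (∃ V, V <:+ W ∧ E.sstate φ V = s) ∧
    growthOf w (E.stateLoopS φ s) = E.gammaC φ}

theorem domCountP_eq (W : List A) : E.domCountP φ W = (E.domP φ [] W).ncard := by
  unfold domCountP domP
  congr 1
  ext p
  simp only [Set.mem_ofPred_eq, List.nil_append]
  refine and_congr_left fun _ => ⟨?_, ?_⟩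
  · rintro ⟨j, -, h⟩
    exact ⟨_, List.take_prefix _ _, h⟩
  · rintro ⟨V, hV, h⟩
    exact ⟨V.length, hV.length_le, by rw [← List.prefix_iff_eq_take.1 hV, h]⟩

theorem domCountS_eq (W : List A) : E.domCountS φ W = (E.domS φ W).ncard := by
  unfold domCountS domS
  congr 1
  ext p
  simp only [Set.mem_ofPred_eq]
  refine and_congr_left fun _ => ⟨?_, ?_⟩
  · rintro ⟨j, -, h⟩
    exact ⟨_, List.drop_suffix _ _, h⟩
  · rintro ⟨V, hV, h⟩
    exact ⟨W.length - V.length, by omega, by rw [← List.suffix_iff_eq_drop.1 hV, h]⟩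

theorem domP_finite (Z U : List A) : (E.domP φ Z U).Finite := by
  refine (Set.finite_Iic (fun i => (φ i).length)).subset ?_
  rintro p ⟨⟨V, -, rfl⟩, -⟩
  exact E.pstate_le_length φ _

theorem domP_card_le (Z U : List A) :
    (E.domP φ Z U).ncard ≤ (Set.Iic (fun i => (φ i).length)).ncard := by
  refine Set.ncard_le_ncard ?_ (Set.finite_Iic _)
  rintro p ⟨⟨V, -, rfl⟩, -⟩
  exact E.pstate_le_length φ _

theorem domCountP_le_Dmax {W : List A} (hW : W ∈ E.Cset φ) :
    E.domCountP φ W ≤ E.Dmax φ := by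
  refine le_csSup ⟨(Set.Iic (fun i => (φ i).length)).ncard, ?_⟩ ⟨W, hW, rfl⟩
  rintro d ⟨W, -, rfl⟩
  rw [domCountP_eq]
  exact E.domP_card_le φ _ _

theorem domP_subset_append (Z U U' : List A) : E.domP φ (Z ++ U) U' ⊆ E.domP φ Z (U ++ U') := by
  rintro p ⟨⟨V, hV, rfl⟩, hd⟩
  exact ⟨⟨U ++ V, (List.prefix_append_right_inj U).2 hV, by rw [List.append_assoc]⟩, hd⟩

theorem domP_subset_left (Z U U' : List A) : E.domP φ Z U ⊆ E.domP φ Z (U ++ U') := by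
  rintro p ⟨⟨V, hV, rfl⟩, hd⟩
  exact ⟨⟨V, hV.trans (List.prefix_append _ _), rfl⟩, hd⟩

theorem domP_ge {Z U : List A} {p : Fin f → ℕ} (h : p ∈ E.domP φ Z U) : E.pstate φ Z ≤ p := by
  obtain ⟨⟨V, -, rfl⟩, -⟩ := h
  exact E.pstate_mono φ Z V

theorem domS_cons (a : A) (Y : List A) : E.domS φ (a :: Y) =
    {s | s = E.sstate φ (a :: Y) ∧ growthOf w (E.stateLoopS φ s) = E.gammaC φ} ∪
      E.domS φ Y := by
  ext s
  simp only [domS, Set.mem_ofPred_eq, Set.mem_union, List.suffix_cons_iff]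
  constructor
  · rintro ⟨⟨V, rfl | hV, rfl⟩, hd⟩
    · exact Or.inl ⟨rfl, hd⟩
    · exact Or.inr ⟨⟨V, hV, rfl⟩, hd⟩
  · rintro (⟨rfl, hd⟩ | ⟨⟨V, hV, rfl⟩, hd⟩)
    · exact ⟨⟨_, Or.inl rfl, rfl⟩, hd⟩
    · exact ⟨⟨V, Or.inr hV, rfl⟩, hd⟩

/-- The block of a dominant suffix state: reading it always meets a dominant prefix state
with the same loop alphabet. -/
theorem exists_dom_block (hw : ∀ a, 0 < w a) (Y : List A)
    (hd : growthOf w (E.stateLoopS φ (E.sstate φ Y)) = E.gammaC φ) :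
    ∃ B : List A, E.sstate φ (B ++ Y) = E.sstate φ Y ∧
      ∀ Z, Z ++ B ∈ E.Cset φ → ∃ p ∈ E.domP φ Z B, p ≤ E.pstate φ (Z ++ B) ∧
        E.stateLoopP φ p = E.stateLoopS φ (E.sstate φ Y) := by
  obtain ⟨B, hB, h⟩ := E.exists_block φ (E.stateLoopS φ (E.sstate φ Y)).toFinset.toList
  simp only [Finset.mem_toList, Set.mem_toFinset] at hB h
  refine ⟨B, E.sstate_block φ Y B hB, fun Z hZ => ?_⟩
  obtain ⟨V, ⟨V', rfl⟩, hl⟩ := h Z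
  rw [← List.append_assoc] at hZ
  have he := E.loop_eq_of_subset φ hw (E.Cset_left φ hZ) hd hl
  refine ⟨_, ⟨⟨V, List.prefix_append _ _, rfl⟩, by rw [← he, hd]⟩, ?_, he.symm⟩
  rw [← List.append_assoc]
  exact E.pstate_mono φ _ _

theorem main_aux (hw : ∀ a, 0 < w a) (Y : List A) : ∃ Y' : List A,
    E.sstate φ Y' = E.sstate φ Y ∧
    (∀ Z, Z ++ Y' ∈ E.Cset φ → (E.domS φ Y).ncard ≤ (E.domP φ Z Y').ncard) ∧
    (∀ Z a, a ∉ E.stateLoopS φ (E.sstate φ Y) → Z ++ [a] ++ Y' ∈ E.Cset φ →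
      (E.domS φ Y).ncard ≤ (E.domP φ (Z ++ [a]) Y' \ {E.pstate φ Z}).ncard) := by
  induction Y with
  | nil =>
    have hsub : E.domS φ [] ⊆ {E.sstate φ []} := by
      rintro s ⟨⟨V, hV, rfl⟩, -⟩
      rw [List.suffix_nil.1 hV]; rfl
    by_cases hd : growthOf w (E.stateLoopS φ (E.sstate φ [])) = E.gammaC φ
    · obtain ⟨B, hB, h⟩ := E.exists_dom_block φ hw [] hd
      have hc : (E.domS φ []).ncard ≤ 1 :=
        (Set.ncard_le_ncard hsub).trans (Set.ncard_singleton _).le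
      refine ⟨B, by simpa using hB, fun Z hZ => ?_, fun Z a ha hZ => ?_⟩
      · obtain ⟨p, hp, -, -⟩ := h Z hZ
        exact hc.trans ((Set.ncard_pos (E.domP_finite φ _ _)).2 ⟨p, hp⟩)
      · obtain ⟨p, hp, -, hl⟩ := h _ hZ
        refine hc.trans ((Set.ncard_pos ((E.domP_finite φ _ _).sdiff)).2 ⟨p, hp, ?_⟩)
        rintro rfl
        rw [← hl, mem_stateLoopP_iff] at ha
        exact ha (_root_.le_antisymm (E.domP_ge φ hp) (E.pstate_mono φ _ _))
    · have : E.domS φ [] = ∅ := by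
        refine Set.eq_empty_of_forall_notMem fun s hs => hd ?_
        have := hsub hs
        rw [Set.mem_singleton_iff] at this
        rw [← this]; exact hs.2
      exact ⟨[], rfl, by simp [this], by simp [this]⟩
  | cons t Y ih =>
    obtain ⟨Y', hs, ha, hb⟩ := ih
    by_cases ht : E.sstate φ (t :: Y) = E.sstate φ Y
    · have : E.domS φ (t :: Y) = E.domS φ Y := by
        rw [domS_cons]
        refine Set.union_eq_self_of_subset_left ?_
        rintro s ⟨rfl, hd⟩
        exact ⟨⟨Y, List.suffix_rfl, ht.symm⟩, hd⟩
      rw [this, ht]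
      exact ⟨Y', hs, ha, hb⟩
    have htl : t ∉ E.stateLoopS φ (E.sstate φ Y) := by rwa [mem_stateLoopS_iff]
    have hst : E.sstate φ (t :: Y') = E.sstate φ (t :: Y) := E.sstate_append_congr φ [t] hs
    by_cases hd : growthOf w (E.stateLoopS φ (E.sstate φ (t :: Y))) = E.gammaC φ
    · obtain ⟨B, hB, h⟩ := E.exists_dom_block φ hw (t :: Y) hd
      have hc : (E.domS φ (t :: Y)).ncard ≤ (E.domS φ Y).ncard + 1 := by
        have : E.domS φ (t :: Y) ⊆ insert (E.sstate φ (t :: Y)) (E.domS φ Y) := by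
          rw [domS_cons]
          rintro s (⟨rfl, -⟩ | h)
          · exact Set.mem_insert _ _
          · exact Set.mem_insert_of_mem _ h
        by_cases hfin : (E.domS φ Y).Finite
        · exact (Set.ncard_le_ncard this (hfin.insert _)).trans (Set.ncard_insert_le _ _)
        · rw [Set.Infinite.ncard]
          · omega
          · refine Set.Infinite.mono ?_ hfin
            rw [domS_cons]
            exact Set.subset_union_right
      -- common part
      have key : ∀ Z, Z ++ (B ++ t :: Y') ∈ E.Cset φ →
          ∃ p ∈ E.domP φ Z (B ++ t :: Y'),
            E.stateLoopP φ p = E.stateLoopS φ (E.sstate φ (t :: Y)) ∧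
            (E.domS φ Y).ncard + 1 ≤
              (insert p (E.domP φ (Z ++ B ++ [t]) Y' \ {E.pstate φ (Z ++ B)})).ncard := by
        intro Z hZ
        have e1 : Z ++ (B ++ t :: Y') = Z ++ B ++ (t :: Y') := by simp
        have e2 : Z ++ (B ++ t :: Y') = Z ++ B ++ [t] ++ Y' := by simp
        obtain ⟨p, hp, hple, hl⟩ := h Z (E.Cset_left φ (e1 ▸ hZ))
        refine ⟨p, E.domP_subset_left φ _ _ _ hp, hl, ?_⟩
        rw [Set.ncard_insert_of_notMem _ (E.domP_finite φ _ _).sdiff]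
        · exact Nat.add_le_add_right (hb _ _ htl (e2 ▸ hZ)) 1
        · rintro ⟨h1, h2⟩
          exact h2 (_root_.le_antisymm hple ((E.pstate_mono φ _ _).trans (E.domP_ge φ h1)))
      have hsub : ∀ Z, E.domP φ (Z ++ B ++ [t]) Y' ⊆ E.domP φ Z (B ++ t :: Y') := by
        intro Z
        have := E.domP_subset_append φ Z (B ++ [t]) Y'
        simpa using this
      refine ⟨B ++ t :: Y', ?_, fun Z hZ => ?_, fun Z a hal hZ => ?_⟩
      · rw [E.sstate_append_congr φ B hst, hB]
      · obtain ⟨p, hp, -, hcard⟩ := key Z hZ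
        refine hc.trans (hcard.trans (Set.ncard_le_ncard ?_ (E.domP_finite φ _ _)))
        exact Set.insert_subset hp (Set.sdiff_subset.trans (hsub Z))
      · obtain ⟨p, hp, hl, hcard⟩ := key _ hZ
        refine hc.trans (hcard.trans (Set.ncard_le_ncard ?_ (E.domP_finite φ _ _).sdiff))
        refine Set.insert_subset ⟨hp, ?_⟩ ?_
        · rintro rfl
          rw [← hl, mem_stateLoopP_iff] at hal
          exact hal (_root_.le_antisymm (E.domP_ge φ hp) (E.pstate_mono φ _ _))
        · rintro q ⟨hq, hq2⟩
          refine ⟨hsub _ hq, ?_⟩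
          rintro rfl
          refine hq2 (_root_.le_antisymm ?_ ?_)
          · exact (E.pstate_mono φ _ _).trans (E.pstate_mono φ _ _)
          · exact (E.pstate_mono φ _ _).trans (E.domP_ge φ hq)
    · have hc : E.domS φ (t :: Y) = E.domS φ Y := by
        rw [domS_cons]
        refine Set.union_eq_self_of_subset_left ?_
        rintro s ⟨rfl, hd'⟩
        exact absurd hd' hd
      rw [hc]
      refine ⟨t :: Y', hst, fun Z hZ => ?_, fun Z a hal hZ => ?_⟩
      · refine (ha (Z ++ [t]) (by simpa using hZ)).trans
          (Set.ncard_le_ncard ?_ (E.domP_finite φ _ _))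
        exact E.domP_subset_append φ Z [t] Y'
      · refine (hb (Z ++ [a]) t htl (by simpa using hZ)).trans
          (Set.ncard_le_ncard ?_ (E.domP_finite φ _ _).sdiff)
        rintro q ⟨hq, hq2⟩
        refine ⟨E.domP_subset_append φ (Z ++ [a]) [t] Y' hq, ?_⟩
        rintro rfl
        exact hq2 (_root_.le_antisymm (E.pstate_mono φ _ _)
          ((E.pstate_mono φ _ _).trans (E.domP_ge φ hq)))

theorem final_aux (hw : ∀ a, 0 < w a) (X Y : List A) (hXY : X ++ Y ∈ E.Cset φ) :
    E.domCountP φ X + E.domCountS φ Y ≤ E.Dmax φ + 1 := by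
  obtain ⟨Y', hs, ha, -⟩ := E.main_aux φ hw Y
  have hC := E.Cset_of_sstate φ hs hXY
  have h1 := ha X hC
  have h2 := E.domCountP_le_Dmax φ hC
  rw [domCountP_eq] at h2 ⊢
  rw [domCountS_eq]
  have h3 := Set.ncard_union_add_ncard_inter (E.domP φ [] X) (E.domP φ X Y')
    (E.domP_finite φ _ _) (E.domP_finite φ _ _)
  have h4 : (E.domP φ [] X ∪ E.domP φ X Y').ncard ≤ (E.domP φ [] (X ++ Y')).ncard :=
    Set.ncard_le_ncard (Set.union_subset (E.domP_subset_left φ _ _ _)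
      (E.domP_subset_append φ [] X Y')) (E.domP_finite φ _ _)
  have h5 : (E.domP φ [] X ∩ E.domP φ X Y').ncard ≤ 1 := by
    rw [← Set.ncard_singleton (E.pstate φ X)]
    refine Set.ncard_le_ncard ?_
    rintro p ⟨⟨⟨V, ⟨V', rfl⟩, rfl⟩, -⟩, hp⟩
    exact _root_.le_antisymm (E.pstate_mono φ _ _) (E.domP_ge φ hp)
  omega

end Growth

end EmbeddingOrder

open EmbeddingOrder

/-- **Lemma `lem-xydom`.**  (Setting: a permutation class with finitely many
sum-indecomposable permutations, unbounded growth function and not sum-closed,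
identified with the set `C = A* ∩ Av(φ¹,…,φ^f)` of words over the finite alphabet `A`
of its sum-indecomposables — with the weight-one letter `one` below every letter and
each forbidden word `φ i` nonempty and minimal outside `C`.)
Let `X` be a word with `d_X` dominant loop blocks in its prefix decomposition, and `Y` a
word with `d_Y` dominant loop blocks in its suffix decomposition.  If `XY ∈ C`, then
`d_X + d_Y ≤ D + 1`. -/
theorem domCount_concat_le {A : Type*} [Fintype A] {w : A → ℕ}
    (E : EmbeddingOrder A w) {f : ℕ} (φ : Fin f → List A)
    (hw : ∀ a, 0 < w a)
    (one : A) (hone : w one = 1) (hone_le : ∀ a : A, E.le [one] [a])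
    (hf : 0 < f) (hφne : ∀ i, φ i ≠ [])
    (hφmin : ∀ i ψ, E.le ψ (φ i) → ψ ≠ φ i → ψ ∈ E.Cset φ)
    (hunb : ¬ ∃ M : ℕ, ∀ n : ℕ,
      Set.ncard {W : List A | W ∈ E.Cset φ ∧ EmbeddingOrder.wt w W = n} ≤ M)
    (X Y : List A) (hXY : X ++ Y ∈ E.Cset φ) :
    E.domCountP φ X + E.domCountS φ Y ≤ E.Dmax φ + 1 := by
  exact E.final_aux φ hw X Y hXY
end

section
/- If a prefix state p ∈ P and a suffix state s ∈ S match, then their loop alphabets coincide: L_p = coL_s. -/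
open Filter Asymptotics
open scoped Classical

open EmbeddingOrder

namespace EmbeddingOrder

variable {A : Type*} {w : A → ℕ} (E : EmbeddingOrder A w) {f : ℕ} (φ : Fin f → List A)

theorem le_append {U V X Y : List A} (h1 : E.le U X) (h2 : E.le V Y) :
    E.le (U ++ V) (X ++ Y) := by
  rw [E.le_iff_factor] at h1 h2 ⊢
  obtain ⟨W1, l1, f1, q1⟩ := h1
  obtain ⟨W2, l2, f2, q2⟩ := h2
  refine ⟨W1 ++ W2, by simp [l1, l2], by simp [f1, f2], ?_⟩
  rw [List.zip_append l1]
  intro q hq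
  rcases List.mem_append.1 hq with h | h
  · exact q1 q h
  · exact q2 q h

theorem le_append_split {W X Y : List A} (h : E.le W (X ++ Y)) :
    ∃ U V, W = U ++ V ∧ E.le U X ∧ E.le V Y := by
  rw [E.le_iff_factor] at h
  obtain ⟨Ws, l, rfl, q⟩ := h
  rw [List.length_append] at l
  have e : Ws = Ws.take X.length ++ Ws.drop X.length := (List.take_append_drop _ _).symm
  have l1 : (Ws.take X.length).length = X.length := by simp; omega
  have l2 : (Ws.drop X.length).length = Y.length := by simp; omega
  generalize Ws.take X.length = W1 at *
  generalize Ws.drop X.length = W2 at *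
  subst e
  rw [List.zip_append l1] at q
  refine ⟨W1.flatten, W2.flatten, by simp, ?_, ?_⟩
  · rw [E.le_iff_factor]
    exact ⟨W1, l1, rfl, fun r hr => q r (List.mem_append_left _ hr)⟩
  · rw [E.le_iff_factor]
    exact ⟨W2, l2, rfl, fun r hr => q r (List.mem_append_right _ hr)⟩

theorem le_append_iff_s13 (W X Y : List A) : E.le W (X ++ Y) ↔
    ∃ j ≤ W.length, E.le (W.take j) X ∧ E.le (W.drop j) Y := by
  constructor
  · intro h
    obtain ⟨U, V, rfl, h1, h2⟩ := E.le_append_split h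
    exact ⟨U.length, by simp, by simpa using h1, by simpa using h2⟩
  · rintro ⟨j, _, h1, h2⟩
    have := E.le_append h1 h2
    rwa [List.take_append_drop] at this

theorem le_left (U V : List A) : E.le U (U ++ V) := by
  simpa using E.le_append (E.le_refl U) (E.nil_le V)

theorem le_right (U V : List A) : E.le V (U ++ V) := by
  simpa using E.le_append (E.nil_le U) (E.le_refl V)

theorem take_le_take (W : List A) {j k : ℕ} (h : j ≤ k) : E.le (W.take j) (W.take k) := by
  have := E.le_left ((W.take k).take j) ((W.take k).drop j)
  rwa [List.take_append_drop, List.take_take, min_eq_left h] at this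

theorem drop_le_drop (W : List A) {j k : ℕ} (h : j ≤ k) : E.le (W.drop k) (W.drop j) := by
  have := E.le_right ((W.drop j).take (k - j)) ((W.drop j).drop (k - j))
  rwa [List.take_append_drop, List.drop_drop, Nat.add_sub_cancel' h] at this

theorem take_le_iff (W : List A) (i : Fin f) {k : ℕ} (hk : k ≤ (φ i).length) :
    E.le ((φ i).take k) W ↔ k ≤ E.pstate φ W i := by
  have hb : BddAbove {p | p ≤ (φ i).length ∧ E.le ((φ i).take p) W} := ⟨_, fun p hp => hp.1⟩
  constructor
  · intro h
    exact le_csSup hb ⟨hk, h⟩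
  · intro h
    have := Nat.sSup_mem (s := {p | p ≤ (φ i).length ∧ E.le ((φ i).take p) W})
      ⟨0, by simp, by simpa using E.nil_le W⟩ hb
    exact E.le_trans (E.take_le_take _ h) this.2

theorem drop_le_iff (W : List A) (i : Fin f) {k : ℕ} (hk : k ≤ (φ i).length) :
    E.le ((φ i).drop ((φ i).length - k)) W ↔ k ≤ E.sstate φ W i := by
  have hb : BddAbove {p | p ≤ (φ i).length ∧ E.le ((φ i).drop ((φ i).length - p)) W} :=
    ⟨_, fun p hp => hp.1⟩
  constructor
  · intro h
    exact le_csSup hb ⟨hk, h⟩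
  · intro h
    have := Nat.sSup_mem (s := {p | p ≤ (φ i).length ∧ E.le ((φ i).drop ((φ i).length - p)) W})
      ⟨0, by simp, by simpa using E.nil_le W⟩ hb
    exact E.le_trans (E.drop_le_drop _ (Nat.sub_le_sub_left h _)) this.2

theorem pstate_le (W : List A) (i : Fin f) : E.pstate φ W i ≤ (φ i).length :=
  csSup_le' fun _ hp => hp.1

theorem overlap_iff (X Y : List A) :
    POverlap φ (E.pstate φ X) (E.sstate φ Y) ↔ ∃ i, E.le (φ i) (X ++ Y) := by
  refine exists_congr fun i => ?_
  rw [le_append_iff_s13]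
  constructor
  · intro h
    have h0 := E.pstate_le φ X i
    refine ⟨_, h0, (E.take_le_iff φ X i h0).2 le_rfl, ?_⟩
    have := (E.drop_le_iff φ Y i (k := (φ i).length - E.pstate φ X i) (by omega)).2 (by omega)
    rwa [Nat.sub_sub_self h0] at this
  · rintro ⟨j, hj, h1, h2⟩
    rw [E.take_le_iff φ X i hj] at h1
    have := E.drop_le_iff φ Y i (k := (φ i).length - j) (by omega)
    rw [Nat.sub_sub_self hj] at this
    have := this.1 h2
    omega

theorem pstate_congr {X X' : List A} (Z : List A) (h : E.pstate φ X = E.pstate φ X') :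
    E.pstate φ (X ++ Z) = E.pstate φ (X' ++ Z) := by
  funext i
  unfold pstate
  congr 1
  ext k
  refine and_congr_right fun hk => ?_
  rw [le_append_iff_s13, le_append_iff_s13]
  refine exists_congr fun j => and_congr_right fun hj => and_congr_left fun _ => ?_
  have hj' : j ≤ k := hj.trans (List.length_take_le _ _)
  rw [List.take_take, min_eq_left hj', E.take_le_iff φ _ i (hj'.trans hk),
    E.take_le_iff φ _ i (hj'.trans hk), h]

theorem sstate_congr {Y Y' : List A} (Z : List A) (h : E.sstate φ Y = E.sstate φ Y') :
    E.sstate φ (Z ++ Y) = E.sstate φ (Z ++ Y') := by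
  funext i
  unfold sstate
  congr 1
  ext k
  refine and_congr_right fun hk => ?_
  rw [le_append_iff_s13, le_append_iff_s13]
  refine exists_congr fun j => and_congr_right fun hj => and_congr_right fun _ => ?_
  have hj' : j ≤ k := by
    rw [List.length_drop] at hj; omega
  have e : (φ i).length - k + j = (φ i).length - (k - j) := by omega
  rw [List.drop_drop, e, E.drop_le_iff φ _ i (by omega), E.drop_le_iff φ _ i (by omega), h]

end EmbeddingOrder

/-- **Lemma `lem-match1`.**  (Setting: a permutation class with finitely many
sum-indecomposable permutations, unbounded growth function and not sum-closed,
identified with the set `C = A* ∩ Av(φ¹,…,φ^f)` of words over the finite alphabet `A`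
of its sum-indecomposables.)  If a prefix state `p ∈ P` and a suffix state `s ∈ S`
(here represented by words `X, Y ∈ C` realising them) match, then their loop alphabets
coincide: `L_p = coL_s`. -/
theorem loopAlphabets_eq_of_matches {A : Type*} [Fintype A] {w : A → ℕ}
    (E : EmbeddingOrder A w) {f : ℕ} (φ : Fin f → List A)
    (hw : ∀ a, 0 < w a)
    (one : A) (hone : w one = 1) (hone_le : ∀ a : A, E.le [one] [a])
    (hf : 0 < f) (hφne : ∀ i, φ i ≠ [])
    (hφmin : ∀ i ψ, E.le ψ (φ i) → ψ ≠ φ i → ψ ∈ E.Cset φ)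
    (hunb : ¬ ∃ M : ℕ, ∀ n : ℕ,
      Set.ncard {W : List A | W ∈ E.Cset φ ∧ EmbeddingOrder.wt w W = n} ≤ M)
    (X Y : List A) (hX : X ∈ E.Cset φ) (hY : Y ∈ E.Cset φ)
    (hmatch : E.Matches φ (E.pstate φ X) (E.sstate φ Y)) :
    E.stateLoopP φ (E.pstate φ X) = E.stateLoopS φ (E.sstate φ Y) := by
  ext a
  have key : ∀ X' Y' : List A, POverlap φ (E.pstate φ X') (E.sstate φ ([a] ++ Y')) ↔
      POverlap φ (E.pstate φ (X' ++ [a])) (E.sstate φ Y') := by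
    intro X' Y'
    rw [E.overlap_iff, E.overlap_iff, List.append_assoc]
  obtain ⟨hc, hP, hS⟩ := hmatch
  constructor
  · intro ha Y' hY'
    by_contra hne
    have ho := hS (E.sstate φ (a :: Y')) ⟨fun h => hne h.symm, a, fun Z hZ =>
      E.sstate_congr φ [a] (hZ.trans hY'.symm)⟩
    have ho' := (key X Y').1 ho
    rw [ha X rfl, hY'] at ho'
    exact hc ho'
  · intro ha X' hX'
    by_contra hne
    have ho := hP (E.pstate φ (X' ++ [a])) ⟨fun h => hne h.symm, a, fun Z hZ =>
      E.pstate_congr φ [a] (hZ.trans hX'.symm)⟩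
    have ho' := (key X' Y).2 ho
    rw [List.singleton_append, ha Y rfl, hX'] at ho'
    exact hc ho'
end
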